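/- arXiv:2204.10354 — 6 statements merged into one kernel-verified Lean document; each statement's English description precedes it below -/
import Mathlib

section
/- Let Γ be a group. Suppose σ : Γ × Γ → ℤ is a ℤ-valued 2-cocycle on Γ and c is a 2-cycle on Γ with ⟨σ,c⟩ ≠ 0. Suppose further that for every N ∈ ℕ there exist an integer n > N, a finite group Q, a surjective group homomorphism q : Γ → Q, a ℤ-valued 2-cocycle σₙ on Γ of n-Q type, and a function α : Γ → ℤ such that σ(g,h) = σₙ(g,h) + α(g) − α(gh) + α(h) for all g,h ∈ Γ. Then Γ is not matricially stable: there exists an asymptotic representation of Γ that is not perturbable to a genuine representation. -/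
noncomputable section
open scoped Classical

/-- The algebra of "n×n complex matrices" realized as bounded operators on `ℓ²(Fin n)`,
equipped with the ℓ²-operator norm. -/
abbrev Mat (n : ℕ) := EuclideanSpace ℂ (Fin n) →L[ℂ] EuclideanSpace ℂ (Fin n)

/-- The boundary of a 2-chain. -/
def chainBoundary {Γ : Type*} [Group Γ] (c : (Γ × Γ) →₀ ℤ) : Γ → ℤ :=
  fun g => c.sum fun p x =>
    x * ((if p.2 = g then 1 else 0) - (if p.1 * p.2 = g then 1 else 0) +
      (if p.1 = g then 1 else 0))

/-- A 2-chain is a 2-cycle if its boundary vanishes. -/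
def IsTwoCycle {Γ : Type*} [Group Γ] (c : (Γ × Γ) →₀ ℤ) : Prop :=
  chainBoundary c = 0

/-- The boundary support of a 2-chain: all `aᵢ`, `bᵢ`, `aᵢbᵢ` for `(aᵢ,bᵢ)` in the support. -/
def boundarySupport {Γ : Type*} [Group Γ] (c : (Γ × Γ) →₀ ℤ) : Set Γ :=
  ⋃ p ∈ c.support, {p.1, p.2, p.1 * p.2}

/-- The pairing of a ℤ-valued 2-cochain with a 2-chain. -/
def pairInt {Γ : Type*} [Group Γ] (σ : Γ → Γ → ℤ) (c : (Γ × Γ) →₀ ℤ) : ℤ :=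
  c.sum fun p x => x * σ p.1 p.2

/-- ℤ-valued 2-cocycle condition. -/
def IsTwoCocycle {Γ : Type*} [Group Γ] (σ : Γ → Γ → ℤ) : Prop :=
  ∀ g₁ g₂ g₃ : Γ, σ g₂ g₃ - σ (g₁ * g₂) g₃ + σ g₁ (g₂ * g₃) - σ g₁ g₂ = 0

/-- The logarithm defined as a power series centered at 1. -/
def matLog {n : ℕ} (m : Mat n) : Mat n :=
  ∑' k : ℕ, ((-1 : ℂ) ^ k / (k + 1)) • (m - 1) ^ (k + 1)

/-- Trace of an operator. -/
def clmTrace {n : ℕ} (f : Mat n) : ℂ :=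
  LinearMap.trace ℂ (EuclideanSpace ℂ (Fin n)) (f : EuclideanSpace ℂ (Fin n) →ₗ[ℂ] EuclideanSpace ℂ (Fin n))

/-- `ρ` is ε-almost multiplicative on the support of `c`. -/
def AlmostMultOn {Γ : Type*} [Group Γ] {n : ℕ} (ρ : Γ → Mat n)
    (c : (Γ × Γ) →₀ ℤ) (ε : ℝ) : Prop :=
  ∀ p ∈ c.support, IsUnit (ρ p.1) ∧ IsUnit (ρ p.2) ∧
    ‖ρ (p.1 * p.2) * Ring.inverse (ρ p.1) * Ring.inverse (ρ p.2) - 1‖ < ε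

/-- The pairing `⟨ρ,c⟩` between an almost multiplicative map and a 2-chain. -/
def pairRho {Γ : Type*} [Group Γ] {n : ℕ} (ρ : Γ → Mat n) (c : (Γ × Γ) →₀ ℤ) : ℂ :=
  (1 / (2 * Real.pi * Complex.I)) *
    c.sum fun p x => (x : ℂ) *
      clmTrace (matLog (ρ (p.1 * p.2) * Ring.inverse (ρ p.2) * Ring.inverse (ρ p.1)))

/-- A sequence of unitary-valued maps forms an asymptotic representation. -/
def IsAsymptoticRep {Γ : Type*} [Group Γ] (N : ℕ → ℕ) (ρ : ∀ k, Γ → Mat (N k)) : Prop :=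
  (∀ k g, ρ k g ∈ unitary (Mat (N k))) ∧
    ∀ g h : Γ, Filter.Tendsto (fun k => ‖ρ k (g * h) - ρ k g * ρ k h‖)
      Filter.atTop (nhds 0)

/-- An asymptotic representation is perturbable to a genuine representation. -/
def Perturbable {Γ : Type*} [Group Γ] (N : ℕ → ℕ) (ρ : ∀ k, Γ → Mat (N k)) : Prop :=
  ∃ ρ' : ∀ k, Γ →* unitary (Mat (N k)),
    ∀ g : Γ, Filter.Tendsto (fun k => ‖ρ k g - (ρ' k g : Mat (N k))‖)
      Filter.atTop (nhds 0)

/-- Matricial stability. -/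
def MatriciallyStable (Γ : Type*) [Group Γ] : Prop :=
  ∀ (N : ℕ → ℕ) (ρ : ∀ k, Γ → Mat (N k)), IsAsymptoticRep N ρ → Perturbable N ρ

open Unitary selfAdjoint

section abstract_part

variable {A : Type*} [CStarAlgebra A] (T : A →L[ℂ] ℂ) (D : A →* ℂ)

lemma abs_arg_mul (hD : ∀ x : selfAdjoint A, D (expUnitary x : A) = Complex.exp (Complex.I * T x))
    (u v : unitary A) (h : ‖(u - 1 : A)‖ + ‖(v - 1 : A)‖ < 2) :
    T (argSelfAdjoint (u * v)) = T (argSelfAdjoint u) + T (argSelfAdjoint v) := by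
  have hu : ‖(u - 1 : A)‖ < 2 := by linarith [norm_nonneg (v - 1 : A)]
  have hv : ‖(v - 1 : A)‖ < 2 := by linarith [norm_nonneg (u - 1 : A)]
  set X := argSelfAdjoint u with hX
  set Y := argSelfAdjoint v with hY
  let w : ℝ → unitary A := fun t => expUnitary (t • X) * expUnitary (t • Y)
  have hwc : Continuous w := by fun_prop
  have hw : ∀ t ∈ Set.Icc (0:ℝ) 1, ‖(w t - 1 : A)‖ < 2 := by
    intro t ht
    have h1 := norm_expUnitary_smul_argSelfAdjoint_sub_one_le u ht hu
    have h2 := norm_expUnitary_smul_argSelfAdjoint_sub_one_le v ht hv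
    have : (w t - 1 : A) = (expUnitary (t • X) : A) * ((expUnitary (t • Y) : A) - 1)
        + ((expUnitary (t • X) : A) - 1) := by
      simp only [w, mul_sub, mul_one, Submonoid.coe_mul]
      abel
    rw [this]
    refine (norm_add_le _ _).trans_lt ?_
    rw [CStarRing.norm_coe_unitary_mul]
    linarith
  let F : ℝ → ℂ := fun t => (T (argSelfAdjoint (w t)) - t * T X - t * T Y) / (2 * Real.pi)
  have hF : ContinuousOn F (Set.Icc 0 1) := by
    have : ContinuousOn (fun t => T (argSelfAdjoint (w t))) (Set.Icc 0 1) := by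
      refine (T.continuous.comp continuous_subtype_val).comp_continuousOn
        (continuousOn_argSelfAdjoint.comp hwc.continuousOn ?_)
      intro t ht
      simpa [Subtype.dist_eq, dist_eq_norm] using hw t ht
    have h2 : Continuous fun t : ℝ => (t : ℂ) * T X := Complex.continuous_ofReal.mul continuous_const
    have h3 : Continuous fun t : ℝ => (t : ℂ) * T Y := Complex.continuous_ofReal.mul continuous_const
    exact ((this.sub h2.continuousOn).sub h3.continuousOn).div_const _
  have hsm : ∀ (t : ℝ) (C : selfAdjoint A), T ((t • C : selfAdjoint A) : A) = t * T C := by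
    intro t C
    have : ((t • C : selfAdjoint A) : A) = (t : ℂ) • (C : A) := by
      simp
    rw [this, map_smul, smul_eq_mul]
  have hint : ∀ t ∈ Set.Icc (0:ℝ) 1, ∃ m : ℤ, F t = m := by
    intro t ht
    have h1 := hD (argSelfAdjoint (w t))
    rw [expUnitary_argSelfAdjoint (hw t ht)] at h1
    have h2 : D (w t : A) =
        Complex.exp (Complex.I * (t * T X)) * Complex.exp (Complex.I * (t * T Y)) := by
      rw [← hsm, ← hsm, ← hD, ← hD, ← map_mul]
      rfl
    rw [h2, ← Complex.exp_add, eq_comm, Complex.exp_eq_exp_iff_exists_int] at h1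
    obtain ⟨m, hm⟩ := h1
    refine ⟨m, ?_⟩
    have hpi : (Real.pi : ℂ) ≠ 0 := by exact_mod_cast Real.pi_ne_zero
    simp only [F]
    rw [div_eq_iff (by simpa using hpi)]
    apply mul_left_cancel₀ Complex.I_ne_zero
    linear_combination hm
  have hconst : F 1 = F 0 := by
    choose! m hm using hint
    have hmc : ContinuousOn m (Set.Icc 0 1) := by
      have hemb : Topology.IsClosedEmbedding ((↑) : ℤ → ℂ) := Complex.isClosedEmbedding_intCast
      rw [hemb.isInducing.continuousOn_iff]
      exact hF.congr fun t ht => (hm t ht).symm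
    have := isPreconnected_Icc.constant hmc (x := (1:ℝ)) (y := (0:ℝ)) (by simp) (by simp)
    rw [hm 1 (by simp), hm 0 (by simp), this]
  have h0 : F 0 = 0 := by
    have : argSelfAdjoint (1 : unitary A) = 0 := by
      rw [← expUnitary_zero, argSelfAdjoint_expUnitary (by simpa using Real.pi_pos)]
    simp [F, w, this, -argSelfAdjoint_coe]
  have h1 : w 1 = u * v := by
    simp only [w, one_smul, hX, hY, expUnitary_argSelfAdjoint hu, expUnitary_argSelfAdjoint hv]
  rw [h0] at hconst
  have hpi : (Real.pi : ℂ) ≠ 0 := by exact_mod_cast Real.pi_ne_zero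
  simp only [F, h1] at hconst
  rw [div_eq_iff (by simpa using hpi)] at hconst
  push_cast at hconst
  linear_combination hconst

lemma abs_arg_conj (hT : ∀ x y, T (x * y) = T (y * x))
    (u w : unitary A) (hu : ‖(u - 1 : A)‖ < 2) :
    T (argSelfAdjoint (w * u * star w)) = T (argSelfAdjoint u) := by
  have hc : ContinuousOn (fun z : ℂ => (Complex.arg z : ℂ)) (spectrum ℂ (u : A)) :=
    Complex.continuous_ofReal.comp_continuousOn (Complex.continuousOn_arg.mono
      ((spectrum_subset_slitPlane_iff_norm_lt_two u.2).mpr hu))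
  have h := StarAlgHomClass.map_cfc (R := ℂ) (S := ℂ) (conjStarAlgAut ℂ A w)
    (fun z : ℂ => (Complex.arg z : ℂ)) (u : A)
    (hf := hc) (hφ := by
      change Continuous fun x : A => (w : A) * x * (star w : A)
      fun_prop) (ha := by cfc_tac) (hφa := by
        rw [conjStarAlgAut_apply]
        exact coe_isStarNormal (w * u * star w))
  rw [conjStarAlgAut_apply, conjStarAlgAut_apply] at h
  simp only [argSelfAdjoint_coe, Submonoid.coe_mul, coe_star]
  rw [← h, hT, ← mul_assoc]
  simp

lemma norm_one_le' : ‖(1 : A)‖ ≤ 1 := by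
  nontriviality A
  simp

lemma abs_scalar (θ : ℝ) (hθ : |θ| < 1) (z : unitary A)
    (hz : (z : A) = Complex.exp (Complex.I * θ) • 1) :
    T (argSelfAdjoint z) = θ * T 1 ∧ ‖(z - 1 : A)‖ < 1 := by
  let X : selfAdjoint A := θ • 1
  have hX : (X : A) = (θ : ℂ) • 1 := by simp [X]
  have hn : ‖X‖ ≤ |θ| := by
    change ‖(X : A)‖ ≤ |θ|
    rw [hX, norm_smul]
    simpa using mul_le_mul_of_nonneg_left (norm_one_le' (A := A)) (abs_nonneg θ)
  have hz' : z = expUnitary X := by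
    ext1
    rw [hz, expUnitary_coe, hX, smul_smul, ← Algebra.algebraMap_eq_smul_one, ← Algebra.algebraMap_eq_smul_one,
      Complex.exp_eq_exp_ℂ, NormedSpace.algebraMap_exp_comm]
  constructor
  · rw [hz', argSelfAdjoint_expUnitary (by linarith [Real.pi_gt_three])]
    rw [hX, map_smul, smul_eq_mul]
  · rw [hz]
    have : Complex.exp (Complex.I * θ) • (1 : A) - 1 = (Complex.exp (Complex.I * θ) - 1) • (1 : A) := by
      rw [sub_smul, one_smul]
    rw [this, norm_smul]
    have h2 := Real.norm_exp_I_mul_ofReal_sub_one_le (x := θ)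
    calc _ ≤ ‖Complex.exp (Complex.I * θ) - 1‖ * 1 := by gcongr; exact norm_one_le'
      _ ≤ |θ| := by simpa using h2
      _ < 1 := hθ

/-- key identity -/
lemma abs_key (hD : ∀ x : selfAdjoint A, D (expUnitary x : A) = Complex.exp (Complex.I * T x))
    (hT : ∀ x y, T (x * y) = T (y * x)) (ra rb rab pa pb : unitary A)
    (θ : ℝ) (hθ : |θ| < 1)
    (hr : (ra * rb : A) = Complex.exp (Complex.I * θ) • (rab : A))
    (ha : ‖(ra - pa : A)‖ < 1) (hb : ‖(rb - pb : A)‖ < 1)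
    (hab : ‖(rab - (pa * pb : unitary A) : A)‖ < 1) :
    T (argSelfAdjoint (ra * star pa)) + T (argSelfAdjoint (rb * star pb))
      = θ * T 1 + T (argSelfAdjoint (rab * star (pa * pb))) := by
  have hzu : Complex.exp (Complex.I * θ) • (1 : A) ∈ unitary A := by
    have : Complex.exp (Complex.I * θ) • (1 : A) = ra * rb * star rab := by
      simp [hr]
    rw [this]
    exact (ra * rb * star rab).2
  let z : unitary A := ⟨_, hzu⟩
  obtain ⟨hz1, hz2⟩ := abs_scalar T θ hθ z rfl
  rw [norm_sub_eq] at ha hb hab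
  have e : (ra * star pa) * (pa * (rb * star pb) * star pa) = z * (rab * star (pa * pb)) := by
    ext1
    have h1 : (star pa : A) * pa = 1 := by simp
    calc ((ra * star pa) * (pa * (rb * star pb) * star pa) : A)
        = ra * ((star pa : A) * pa) * (rb * star pb) * star pa := by simp only [mul_assoc, coe_star]
      _ = (ra * rb : A) * star pb * star pa := by rw [h1]; simp only [mul_assoc, mul_one]
      _ = z * (rab * star (pa * pb : A)) := by
        rw [hr]; simp [z, mul_assoc]
  have h3 : ‖((pa * (rb * star pb) * star pa : unitary A) - 1 : A)‖ < 1 := by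
    have : ((pa * (rb * star pb) * star pa : unitary A) - 1 : A)
        = pa * (((rb * star pb : unitary A) : A) - 1) * (star pa : unitary A) := by
      simp [mul_sub, sub_mul, mul_assoc]
    rw [this, CStarRing.norm_mul_coe_unitary, CStarRing.norm_coe_unitary_mul]
    exact hb
  have := abs_arg_mul T D hD _ _ (by linarith : ‖((ra * star pa : unitary A) - 1 : A)‖ +
    ‖((pa * (rb * star pb) * star pa : unitary A) - 1 : A)‖ < 2)
  rw [e, abs_arg_mul T D hD _ _ (by linarith), hz1, abs_arg_conj T hT _ _ (by linarith)] at this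
  exact this.symm

end abstract_part

lemma det_exp_herm {d : ℕ} {H : Matrix (Fin d) (Fin d) ℂ} (hH : H.IsHermitian) :
    (NormedSpace.exp (Complex.I • H)).det = Complex.exp (Complex.I * H.trace) := by
  let u : (Matrix (Fin d) (Fin d) ℂ)ˣ := Unitary.toUnits hH.eigenvectorUnitary
  have h := hH.spectral_theorem
  rw [Unitary.conjStarAlgAut_apply] at h
  have hu : Complex.I • H = (u : Matrix (Fin d) (Fin d) ℂ) *
      Matrix.diagonal (Complex.I • (fun i => (hH.eigenvalues i : ℂ))) * (u⁻¹ : (Matrix (Fin d) (Fin d) ℂ)ˣ) := by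
    rw [Matrix.diagonal_smul, Matrix.mul_smul, Matrix.smul_mul]
    congr 1
  have ht : H.trace = ∑ i, (hH.eigenvalues i : ℂ) := by
    simpa using hH.trace_eq_sum_eigenvalues
  rw [hu, Matrix.exp_units_conj, Matrix.exp_diagonal, Matrix.det_units_conj, Matrix.det_diagonal, ht,
    Finset.mul_sum, Complex.exp_sum]
  refine Finset.prod_congr rfl fun i _ => ?_
  rw [Pi.coe_exp, ← Complex.exp_eq_exp_ℂ]
  simp

abbrev toM (d : ℕ) : Mat d ≃⋆ₐ[ℂ] Matrix (Fin d) (Fin d) ℂ :=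
  (Matrix.toEuclideanCLM (n := Fin d) (𝕜 := ℂ)).symm

def toMR (d : ℕ) : Mat d →+* Matrix (Fin d) (Fin d) ℂ := (toM d).toAlgEquiv.toRingEquiv.toRingHom

lemma toMR_apply (d : ℕ) (x : Mat d) : toMR d x = toM d x := rfl

lemma continuous_toMR (d : ℕ) : Continuous (toMR d) :=
  LinearMap.continuous_of_finiteDimensional ((toM d).toAlgEquiv.toLinearMap)

section
open scoped Matrix.Norms.Operator
lemma toMR_exp (d : ℕ) (x : Mat d) : toMR d (NormedSpace.exp x) = NormedSpace.exp (toMR d x) := by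
  let +nondep : NormedAlgebra ℚ (Mat d) := .restrictScalars ℚ ℂ _
  exact NormedSpace.map_exp (toMR d) (continuous_toMR d) x
end

def TT (d : ℕ) : Mat d →L[ℂ] ℂ :=
  ⟨(Matrix.traceLinearMap (Fin d) ℂ ℂ).comp ((toM d).toAlgEquiv.toLinearMap),
    Continuous.matrix_trace (continuous_toMR d)⟩

lemma TT_apply (d : ℕ) (x : Mat d) : TT d x = (toMR d x).trace := rfl

def DD (d : ℕ) : Mat d →* ℂ := Matrix.detMonoidHom.comp (toMR d).toMonoidHom

lemma TT_comm (d : ℕ) (x y : Mat d) : TT d (x * y) = TT d (y * x) := by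
  rw [TT_apply, TT_apply, map_mul, Matrix.trace_mul_comm, map_mul]

lemma TT_one (d : ℕ) : TT d 1 = d := by
  rw [TT_apply, map_one]; simp

lemma DD_exp {d : ℕ} (x : selfAdjoint (Mat d)) :
    DD d (expUnitary x : Mat d) = Complex.exp (Complex.I * TT d x) := by
  change (toMR d (expUnitary x : Mat d)).det = _
  rw [expUnitary_coe, toMR_exp]
  have h : toMR d (Complex.I • (x : Mat d)) = Complex.I • toMR d x :=
    map_smul (toM d) Complex.I (x : Mat d)
  rw [h]
  apply det_exp_herm
  have h2 : star (x : Mat d) = x := x.2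
  have h3 : toM d (star (x : Mat d)) = star (toM d (x : Mat d)) :=
    (toM d).map_star' (x : Mat d)
  rw [h2] at h3
  exact h3.symm

/-- the n-th root character -/
def ee (n : ℕ) (m : ℤ) : ℂ := Complex.exp (Complex.I * ((2 * Real.pi * m / n : ℝ) : ℂ))

lemma ee_add (n : ℕ) (a b : ℤ) : ee n (a + b) = ee n a * ee n b := by
  rw [ee, ee, ee, ← Complex.exp_add]; congr 1; push_cast; ring

lemma ee_congr (n : ℕ) (hn : 0 < n) (a b : ℤ) (h : (a : ZMod n) = b) : ee n a = ee n b := by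
  rw [ZMod.intCast_eq_intCast_iff_dvd_sub] at h
  obtain ⟨m, hm⟩ := h
  obtain rfl : b = a + n * m := by linarith
  rw [ee_add]
  have : ee n (n * m) = 1 := by
    rw [ee, Complex.exp_eq_one_iff]
    refine ⟨m, ?_⟩
    have : (n : ℂ) ≠ 0 := by exact_mod_cast hn.ne'
    push_cast
    field_simp
  rw [this, mul_one]

lemma ee_norm (n : ℕ) (m : ℤ) : (starRingEnd ℂ) (ee n m) * ee n m = 1 := by
  rw [ee, ← Complex.exp_conj, ← Complex.exp_add, map_mul, Complex.conj_I, Complex.conj_ofReal]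
  simp

def monoMat {d : ℕ} (p : Fin d → Fin d) (w : Fin d → ℂ) : Matrix (Fin d) (Fin d) ℂ :=
  Matrix.of fun i j => if i = p j then w j else 0

lemma monoMat_mul {d : ℕ} (p p' : Fin d → Fin d) (w w' : Fin d → ℂ) :
    monoMat p w * monoMat p' w' = monoMat (p ∘ p') (fun j => w (p' j) * w' j) := by
  ext i j
  simp [monoMat, Matrix.mul_apply]

lemma monoMat_unitary {d : ℕ} (p : Fin d → Fin d) (hp : Function.Injective p) (w : Fin d → ℂ)
    (hw : ∀ j, (starRingEnd ℂ) (w j) * w j = 1) : monoMat p w ∈ unitary (Matrix (Fin d) (Fin d) ℂ) := by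
  have : star (monoMat p w) * monoMat p w = 1 := by
    ext i j
    simp only [monoMat, Matrix.mul_apply, Matrix.star_apply, Matrix.of_apply, Matrix.one_apply]
    simp only [mul_ite, mul_zero, Finset.sum_ite_eq', Finset.sum_ite_eq, Finset.mem_univ, if_true]
    by_cases h : i = j
    · subst h; simp [hw]
    · have : p j ≠ p i := fun h' => h (hp h').symm
      simp [h, this]
  exact ⟨this, mul_eq_one_comm.mp this⟩

lemma exists_proj {Γ : Type*} [Group Γ] (σ : Γ → Γ → ℤ) (n : ℕ) (hn : 0 < n)
    (h : ∃ (Q : Type) (_ : Group Q) (_ : Fintype Q) (q : Γ →* Q),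
        Function.Surjective q ∧
        ∃ σₙ : Γ → Γ → ℤ, IsTwoCocycle σₙ ∧
          (∃ σ' : Q → Q → ZMod n, ∀ g h : Γ, ((σₙ g h : ℤ) : ZMod n) = σ' (q g) (q h)) ∧
          ∃ α : Γ → ℤ, ∀ g h : Γ, σ g h = σₙ g h + α g - α (g * h) + α h) :
    ∃ (d : ℕ) (ρ : Γ → Mat d), 0 < d ∧ (∀ g, ρ g ∈ unitary (Mat d)) ∧
      ∀ g h, ρ g * ρ h = ee n (σ g h) • ρ (g * h) := by
  obtain ⟨Q, _, _, q, hq, s, hs, ⟨s', hs'⟩, α, hα⟩ := h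
  let e : Fin (Fintype.card Q) ≃ Q := (Fintype.equivFin Q).symm
  choose sec hsec using hq
  let p : Γ → Fin (Fintype.card Q) → Fin (Fintype.card Q) := fun g j => e.symm (q g * e j)
  let w : Γ → Fin (Fintype.card Q) → ℂ := fun g j => ee n (α g + s g (sec (e j)))
  let M : Γ → Matrix (Fin (Fintype.card Q)) (Fin (Fintype.card Q)) ℂ := fun g => monoMat (p g) (w g)
  refine ⟨Fintype.card Q, fun g => (toM _).symm (M g), Fintype.card_pos, fun g => ?_, fun g h => ?_⟩
  · have hM : M g ∈ unitary (Matrix (Fin (Fintype.card Q)) (Fin (Fintype.card Q)) ℂ) := by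
      apply monoMat_unitary
      · intro i j hij
        simpa [p] using hij
      · intro j
        exact ee_norm _ _
    exact Unitary.map_mem (toM _).symm hM
  · rw [← map_mul, ← map_smul]
    congr 1
    change monoMat _ _ * monoMat _ _ = _ • monoMat _ _
    rw [monoMat_mul]
    have hp : p g ∘ p h = p (g * h) := by
      ext j; simp [p, mul_assoc]
    rw [hp]
    have hw : ∀ j, w g (p h j) * w h j = ee n (σ g h) * w (g * h) j := by
      intro j
      simp only [w]
      rw [← ee_add, ← ee_add]
      apply ee_congr n hn
      have h1 := hs g h (sec (e j))
      have h2 : ((s g (sec (e (p h j))) : ℤ) : ZMod n) = (s g (h * sec (e j)) : ℤ) := by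
        rw [hs', hs']
        simp [p, hsec]
      have h3 := congrArg (Int.cast : ℤ → ZMod n) h1
      rw [hα]
      push_cast at h3 ⊢
      rw [h2]
      linear_combination h3
    ext i j
    simp [monoMat, hw]

lemma ee_tendsto (m : ℤ) (n : ℕ → ℕ) (hn : ∀ k, k < n k) :
    Filter.Tendsto (fun k => 2 * Real.pi * m / n k : ℕ → ℝ) Filter.atTop (nhds 0) := by
  apply Filter.Tendsto.div_atTop tendsto_const_nhds
  apply tendsto_natCast_atTop_atTop.comp
  exact Filter.tendsto_atTop_mono (fun k => (hn k).le) Filter.tendsto_id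

lemma cycle_sum {Γ : Type*} [Group Γ] (c : (Γ × Γ) →₀ ℤ) (hc : IsTwoCycle c) (φ : Γ → ℂ) :
    (c.sum fun p x => (x : ℂ) * (φ p.2 - φ (p.1 * p.2) + φ p.1)) = 0 := by
  let S : Finset Γ := c.support.biUnion fun p => {p.1, p.2, p.1 * p.2}
  have hS : ∀ p ∈ c.support, p.1 ∈ S ∧ p.2 ∈ S ∧ p.1 * p.2 ∈ S := by
    intro p hp
    simp only [S, Finset.mem_biUnion]
    exact ⟨⟨p, hp, by simp⟩, ⟨p, hp, by simp⟩, ⟨p, hp, by simp⟩⟩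
  have h0 : ∑ g ∈ S, φ g * ((chainBoundary c g : ℤ) : ℂ) = 0 := by
    rw [hc]; simp
  rw [← h0]
  simp only [chainBoundary, Finsupp.sum]
  push_cast
  simp only [Finset.mul_sum]
  rw [Finset.sum_comm]
  refine Finset.sum_congr rfl fun p hp => ?_
  obtain ⟨h1, h2, h3⟩ := hS p hp
  have : ∀ a ∈ S, φ a = ∑ g ∈ S, φ g * (if a = g then 1 else 0) := by
    intro a ha
    simp [ha]
  rw [this _ h1, this _ h2, this _ h3, ← Finset.sum_sub_distrib, ← Finset.sum_add_distrib, Finset.mul_sum]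
  refine Finset.sum_congr rfl fun g _ => ?_
  ring

lemma main_aux {Γ : Type*} [Group Γ] (σ : Γ → Γ → ℤ) (c : (Γ × Γ) →₀ ℤ)
    (hc : IsTwoCycle c) (hpair : pairInt σ c ≠ 0)
    (hfin : ∀ N : ℕ, ∃ n : ℕ, N < n ∧
      ∃ (Q : Type) (_ : Group Q) (_ : Fintype Q) (q : Γ →* Q),
        Function.Surjective q ∧
        ∃ σₙ : Γ → Γ → ℤ, IsTwoCocycle σₙ ∧
          (∃ σ' : Q → Q → ZMod n, ∀ g h : Γ, ((σₙ g h : ℤ) : ZMod n) = σ' (q g) (q h)) ∧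
          ∃ α : Γ → ℤ, ∀ g h : Γ, σ g h = σₙ g h + α g - α (g * h) + α h) :
      ∃ (N : ℕ → ℕ) (ρ : ∀ k, Γ → Mat (N k)), IsAsymptoticRep N ρ ∧ ¬ Perturbable N ρ := by
  choose n hn hex using hfin
  have hn0 : ∀ k, 0 < n k := fun k => (Nat.zero_le _).trans_lt (hn k)
  choose N ρ hN hρu hρ using fun k => exists_proj σ (n k) (hn0 k) (hex k)
  refine ⟨N, ρ, ⟨hρu, fun g h => ?_⟩, ?_⟩
  · have ht := (ee_tendsto (σ g h) n hn).norm
    rw [norm_zero] at ht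
    refine squeeze_zero (fun _ => norm_nonneg _) (fun k => ?_) ht
    rw [hρ]
    have : ρ k (g * h) - ee (n k) (σ g h) • ρ k (g * h) = -((ee (n k) (σ g h) - 1) • ρ k (g * h)) := by
      module
    rw [this, norm_neg, norm_smul]
    have h1 : ‖ρ k (g * h)‖ ≤ 1 := by
      have h0 := CStarRing.norm_coe_unitary_mul (⟨_, hρu k (g * h)⟩ : unitary (Mat (N k))) 1
      rw [mul_one] at h0
      exact h0.trans_le norm_one_le'
    calc _ ≤ ‖ee (n k) (σ g h) - 1‖ * 1 := by gcongr
      _ ≤ _ := by rw [mul_one]; exact Real.norm_exp_I_mul_ofReal_sub_one_le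
  · rintro ⟨π, hπ⟩
    have hev : ∀ᶠ k in Filter.atTop, ∀ p ∈ c.support,
        ‖ρ k p.1 - (π k p.1 : Mat (N k))‖ < 1 ∧ ‖ρ k p.2 - (π k p.2 : Mat (N k))‖ < 1 ∧
        ‖ρ k (p.1 * p.2) - (π k (p.1 * p.2) : Mat (N k))‖ < 1 ∧
        |2 * Real.pi * (σ p.1 p.2) / n k| < 1 := by
      rw [Filter.eventually_all_finset]
      intro p hp
      have ht := (ee_tendsto (σ p.1 p.2) n hn).abs
      rw [abs_zero] at ht
      exact ((hπ p.1).eventually_lt_const one_pos).and (((hπ p.2).eventually_lt_const one_pos).and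
        (((hπ (p.1 * p.2)).eventually_lt_const one_pos).and (ht.eventually_lt_const one_pos)))
    obtain ⟨k, hk⟩ := hev.exists
    let r : Γ → unitary (Mat (N k)) := fun g => ⟨ρ k g, hρu k g⟩
    let φ : Γ → ℂ := fun g => TT (N k) (argSelfAdjoint (r g * star (π k g)) : selfAdjoint (Mat (N k)))
    have hφ := cycle_sum c hc φ
    have hkey : ∀ p ∈ c.support, φ p.2 - φ (p.1 * p.2) + φ p.1 =
        (2 * Real.pi * N k / n k) * σ p.1 p.2 := by
      intro p hp
      obtain ⟨h1, h2, h3, h4⟩ := hk p hp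
      rw [map_mul] at h3
      have := abs_key (TT (N k)) (DD (N k)) DD_exp (TT_comm (N k)) (r p.1) (r p.2) (r (p.1 * p.2))
        (π k p.1) (π k p.2) _ h4 (hρ k p.1 p.2) h1 h2 h3
      rw [← map_mul, TT_one] at this
      change φ p.1 + φ p.2 = _ + φ (p.1 * p.2) at this
      push_cast at this
      linear_combination this
    have h2 : (c.sum fun p x => (x : ℂ) * (φ p.2 - φ (p.1 * p.2) + φ p.1)) =
        (2 * Real.pi * N k / n k) * (pairInt σ c : ℤ) := by
      simp only [pairInt, Finsupp.sum]
      push_cast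
      rw [Finset.mul_sum]
      refine Finset.sum_congr rfl fun p hp => ?_
      rw [hkey p hp]; ring
    rw [h2] at hφ
    have hpi : (Real.pi : ℂ) ≠ 0 := by exact_mod_cast Real.pi_ne_zero
    have e1 : (N k : ℂ) ≠ 0 := by exact_mod_cast (hN k).ne'
    have e2 : (n k : ℂ) ≠ 0 := by exact_mod_cast (hn0 k).ne'
    have e3 : (pairInt σ c : ℂ) ≠ 0 := by exact_mod_cast hpair
    simp [hpi, e1, e2, e3] at hφ

/-- If `σ` is a ℤ-valued 2-cocycle on `Γ`, `c` is a 2-cycle with `⟨σ,c⟩ ≠ 0`,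
and for every `N` there are `n > N`, a finite quotient `q : Γ → Q`, a 2-cocycle `σₙ` of
`n`-`Q` type and a 1-cochain `α` with `σ = σₙ + ∂α`, then `Γ` is not matricially stable:
there is an asymptotic representation of `Γ` that is not perturbable to a genuine
representation. -/
theorem stmt0 {Γ : Type*} [Group Γ] (σ : Γ → Γ → ℤ) (c : (Γ × Γ) →₀ ℤ)
    (hσ : IsTwoCocycle σ) (hc : IsTwoCycle c) (hpair : pairInt σ c ≠ 0)
    (hfin : ∀ N : ℕ, ∃ n : ℕ, N < n ∧
      ∃ (Q : Type) (_ : Group Q) (_ : Fintype Q) (q : Γ →* Q),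
        Function.Surjective q ∧
        ∃ σₙ : Γ → Γ → ℤ, IsTwoCocycle σₙ ∧
          (∃ σ' : Q → Q → ZMod n, ∀ g h : Γ, ((σₙ g h : ℤ) : ZMod n) = σ' (q g) (q h)) ∧
          ∃ α : Γ → ℤ, ∀ g h : Γ, σ g h = σₙ g h + α g - α (g * h) + α h) :
    ¬ MatriciallyStable Γ ∧
      ∃ (N : ℕ → ℕ) (ρ : ∀ k, Γ → Mat (N k)), IsAsymptoticRep N ρ ∧ ¬ Perturbable N ρ := by
  have h := main_aux σ c hc hpair hfin
  refine ⟨fun hst => ?_, h⟩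
  obtain ⟨N, ρ, h1, h2⟩ := h
  exact h2 (hst N ρ h1)
end
end

section
/- Let G̃ and Γ be groups, φ : G̃ → Γ a surjective group homomorphism, and z ∈ G̃ a central element of infinite order such that ker φ equals the cyclic subgroup generated by z. Assume G̃ is residually finite: for every g ∈ G̃ with g ≠ 1 there is a finite-index subgroup of G̃ not containing g. Let θ : Γ → G̃ be a set-theoretic section of φ, and let σ : Γ × Γ → ℤ be the function determined by θ(g)θ(h) = z^{σ(g,h)} θ(gh) for all g,h ∈ Γ. If there exists a 2-cycle c on Γ with ⟨σ,c⟩ ≠ 0, then Γ is not matricially stable. -/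
noncomputable section
open scoped Classical

lemma aux_zero {X : Type*} [TopologicalSpace X] {S : Set X} (hS : IsPreconnected S)
    (f g : X → ℂ) (hf : ContinuousOn f S) (hg : ContinuousOn g S)
    (h : ∀ x ∈ S, Complex.exp (f x) = Complex.exp (g x)) {s : X} (hs : s ∈ S)
    (h0 : f s = g s) : ∀ x ∈ S, f x = g x := by
  have := Complex.isCoveringMap_exp.eqOn_of_comp_eqOn hS hf hg
    (fun x hx => by simpa [Subtype.ext_iff] using h x hx) hs h0
  exact this

lemma aux_log (n : ℕ) : ∃ L : Mat n → ℂ, ContinuousOn L (Metric.ball 1 1) ∧ L 1 = 0 ∧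
    ∀ A ∈ Metric.ball (1 : Mat n) 1, Complex.exp (L A) = A.det := by
  have hconv : Convex ℝ (Metric.ball (1 : Mat n) 1) := convex_ball _ _
  have hne : (Metric.ball (1 : Mat n) 1).Nonempty := ⟨1, by simp⟩
  have := hconv.contractibleSpace hne
  have : LocallyPathConnectedSpace (Metric.ball (1 : Mat n) 1) :=
    Metric.isOpen_ball.locallyPathConnectedSpace
  have hcd : Continuous fun A : Mat n => A.det := ContinuousLinearMap.continuous_det
  let f : C(Metric.ball (1 : Mat n) 1, ℂ) := ⟨fun A => (A : Mat n).det, hcd.comp continuous_subtype_val⟩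
  have hs : ∀ a, f a ∈ ({0}ᶜ : Set ℂ) := by
    rintro ⟨A, hA⟩
    have hu : IsUnit A := by
      have : ‖1 - A‖ < 1 := by rwa [Metric.mem_ball, dist_comm, dist_eq_norm] at hA
      simpa using isUnit_one_sub_of_norm_lt_one this
    have h2 : IsUnit (A : EuclideanSpace ℂ (Fin n) →ₗ[ℂ] EuclideanSpace ℂ (Fin n)) :=
      hu.map (ContinuousLinearMap.toLinearMapRingHom :
        Mat n →+* (EuclideanSpace ℂ (Fin n) →ₗ[ℂ] EuclideanSpace ℂ (Fin n)))
    have := LinearMap.isUnit_det _ h2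
    simpa [f, ContinuousLinearMap.det] using this.ne_zero
  obtain ⟨F, ⟨hF0, hF⟩, -⟩ := Complex.isCoveringMapOn_exp.existsUnique_continuousMap_lifts f
    (a₀ := ⟨1, by simp⟩) (e₀ := 0) (by simp [f, ContinuousLinearMap.det]) hs
  refine ⟨fun A => if h : A ∈ Metric.ball (1 : Mat n) 1 then F ⟨A, h⟩ else 0, ?_, ?_, ?_⟩
  · rw [continuousOn_iff_continuous_domRestrict]
    convert F.continuous using 1
    ext ⟨A, hA⟩
    simp only [Set.domRestrict_apply]
    rw [dif_pos hA]
  · simp [hF0]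
  · intro A hA
    simp only [dif_pos hA]
    exact congrFun hF ⟨A, hA⟩

lemma aux_det_mul {n : ℕ} (A B : Mat n) : (A * B).det = A.det * B.det := by
  simp [ContinuousLinearMap.det, ContinuousLinearMap.mul_def]

lemma aux_L_mul {n : ℕ} (L : Mat n → ℂ) (hL : ContinuousOn L (Metric.ball 1 1)) (h1 : L 1 = 0)
    (hexp : ∀ A ∈ Metric.ball (1 : Mat n) 1, Complex.exp (L A) = A.det)
    (V : Mat n) (hV : V ∈ unitary (Mat n)) (A B : Mat n)
    (hA : ‖A - 1‖ < 1/3) (hB : ‖B - 1‖ < 1/3) :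
    L (A * (V * B * star V)) = L A + L B := by
  have hVV : V * star V = 1 := (Unitary.mem_iff.mp hV).2
  let S := Metric.ball (1 : Mat n) (1/3) ×ˢ Metric.ball (1 : Mat n) (1/3)
  have hsub : Metric.ball (1 : Mat n) (1/3) ⊆ Metric.ball (1 : Mat n) 1 :=
    Metric.ball_subset_ball (by norm_num)
  have hm : ∀ p ∈ S, p.1 * (V * p.2 * star V) ∈ Metric.ball (1 : Mat n) 1 := by
    rintro ⟨A, B⟩ ⟨hA, hB⟩
    simp only [Metric.mem_ball, dist_eq_norm] at hA hB ⊢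
    have e1 : ‖V * B * star V - 1‖ = ‖B - 1‖ := by
      have : V * B * star V - 1 = V * (B - 1) * star V := by
        rw [mul_sub, sub_mul, mul_one, hVV]
      rw [this, CStarRing.norm_mul_mem_unitary _ (Unitary.star_mem hV),
        CStarRing.norm_mem_unitary_mul _ hV]
    set C := V * B * star V
    have e2 : A * C - 1 = (A - 1) * (C - 1) + (A - 1) + (C - 1) := by
      simp only [mul_sub, sub_mul, mul_one, one_mul]; abel
    have := norm_add₃_le (a := (A - 1) * (C - 1)) (b := A - 1) (c := C - 1)
    have h3 := norm_mul_le (A - 1) (C - 1)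
    rw [e1] at *
    rw [e2]
    nlinarith [norm_nonneg (A - 1), norm_nonneg (B - 1)]
  have hS : IsPreconnected S := ((convex_ball _ _).prod (convex_ball _ _)).isPreconnected
  refine aux_zero hS (fun p => L (p.1 * (V * p.2 * star V))) (fun p => L p.1 + L p.2)
    ?_ ?_ ?_ (s := (1, 1)) (by simp [S]) ?_ (A, B) ?_
  · exact hL.comp (by fun_prop) hm
  · exact (hL.comp continuousOn_fst fun p hp => hsub hp.1).add
      (hL.comp continuousOn_snd fun p hp => hsub hp.2)
  · intro p hp
    have hdV : V.det * (star V).det = 1 := by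
      rw [← aux_det_mul, hVV]; simp [ContinuousLinearMap.det]
    rw [hexp _ (hm p hp), Complex.exp_add, hexp _ (hsub hp.1), hexp _ (hsub hp.2)]
    simp only [aux_det_mul]
    linear_combination p.1.det * p.2.det * hdV
  · simp [h1, hVV]
  · exact ⟨by rwa [Metric.mem_ball, dist_eq_norm], by rwa [Metric.mem_ball, dist_eq_norm]⟩

lemma aux_L_smul {n : ℕ} (L : Mat n → ℂ) (hL : ContinuousOn L (Metric.ball 1 1)) (h1 : L 1 = 0)
    (hexp : ∀ A ∈ Metric.ball (1 : Mat n) 1, Complex.exp (L A) = A.det)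
    (t : ℝ) (A : Mat n) (ht : |t| < 1/3)
    (hA : ‖A - 1‖ < 1/3) :
    L (Complex.exp (Complex.I * t) • A) = L A + n * (Complex.I * t) := by
  let S := Metric.ball (0 : ℝ) (1/3) ×ˢ Metric.ball (1 : Mat n) (1/3)
  have hsub : Metric.ball (1 : Mat n) (1/3) ⊆ Metric.ball (1 : Mat n) 1 :=
    Metric.ball_subset_ball (by norm_num)
  have hm : ∀ p ∈ S, Complex.exp (Complex.I * p.1) • p.2 ∈ Metric.ball (1 : Mat n) 1 := by
    rintro ⟨s, A⟩ ⟨hs, hA⟩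
    simp only [Metric.mem_ball, dist_eq_norm, sub_zero] at hs hA ⊢
    have e2 : Complex.exp (Complex.I * s) • A - 1
      = Complex.exp (Complex.I * s) • (A - 1) + (Complex.exp (Complex.I * s) - 1) • 1 := by
      module
    have h2 : ‖Complex.exp (Complex.I * s) • (A - 1)‖ = ‖A - 1‖ := by
      rw [norm_smul, mul_comm Complex.I, Complex.norm_exp_ofReal_mul_I, one_mul]
    have h3 : ‖(Complex.exp (Complex.I * s) - 1) • (1 : Mat n)‖ ≤ ‖s‖ := by
      rw [norm_smul]
      calc _ ≤ ‖s‖ * 1 := by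
            gcongr
            · exact Real.norm_exp_I_mul_ofReal_sub_one_le
            · exact ContinuousLinearMap.norm_id_le
        _ = _ := mul_one _
    rw [e2]
    refine (norm_add_le _ _).trans_lt ?_
    linarith
  have hS : IsPreconnected S := ((convex_ball _ _).prod (convex_ball _ _)).isPreconnected
  refine aux_zero hS (fun p => L (Complex.exp (Complex.I * p.1) • p.2))
    (fun p => L p.2 + n * (Complex.I * p.1))
    ?_ ?_ ?_ (s := (0, 1)) (by simp [S]) ?_ (t, A) ?_
  · exact hL.comp (by fun_prop) hm
  · exact (hL.comp continuousOn_snd fun p hp => hsub hp.2).add (by fun_prop)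
  · intro p hp
    rw [hexp _ (hm p hp), Complex.exp_add, hexp _ (hsub hp.2), Complex.exp_nat_mul]
    simp [ContinuousLinearMap.det, LinearMap.det_smul, mul_comm]
  · simp [h1]
  · exact ⟨by rwa [Metric.mem_ball, dist_eq_norm, sub_zero], by rwa [Metric.mem_ball, dist_eq_norm]⟩

lemma aux_quot {G : Type*} [Group G] (z : G) (hzord : ¬ IsOfFinOrder z)
    (hrf : ∀ g : G, g ≠ 1 → ∃ H : Subgroup G, H.FiniteIndex ∧ g ∉ H) (M : ℕ) :
    ∃ H : Subgroup G, H.Normal ∧ H.FiniteIndex ∧ ∀ j : ℕ, 0 < j → j ≤ M → z ^ j ∉ H := by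
  have hz : ∀ j : ℕ, 0 < j → z ^ j ≠ 1 := fun j hj h =>
    hzord (isOfFinOrder_iff_pow_eq_one.mpr ⟨j, hj, h⟩)
  have : ∀ j : ℕ, ∃ H : Subgroup G, H.FiniteIndex ∧ (0 < j → z ^ j ∉ H) := by
    intro j
    by_cases hj : 0 < j
    · obtain ⟨H, h1, h2⟩ := hrf _ (hz j hj)
      exact ⟨H, h1, fun _ => h2⟩
    · exact ⟨⊤, inferInstance, fun h => absurd h hj⟩
  choose H h1 h2 using this
  have hfi : (⨅ j : Fin (M + 1), H j).FiniteIndex := Subgroup.finiteIndex_iInf fun j => h1 j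
  refine ⟨(⨅ j : Fin (M + 1), H j).normalCore, inferInstance, inferInstance, fun j hj hjM hmem => ?_⟩
  have := Subgroup.normalCore_le _ hmem
  rw [Subgroup.mem_iInf] at this
  exact h2 j hj (this ⟨j, by omega⟩)

/-- the eigenspace -/
def auxW (Q : Type*) [Group Q] [Fintype Q] (ζ : Q) (ω : ℂ) : Submodule ℂ (EuclideanSpace ℂ Q) where
  carrier := {f | ∀ q, f (ζ * q) = ω * f q}
  add_mem' := by
    intro a b ha hb q
    simp only [Set.mem_ofPred_eq] at ha hb
    simp [ha q, hb q, mul_add]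
  zero_mem' := by intro q; simp
  smul_mem' := by
    intro c a ha q
    simp only [Set.mem_ofPred_eq] at ha
    simp only [PiLp.smul_apply, ha q, smul_eq_mul]
    ring

/-- translation -/
def auxT (Q : Type*) [Group Q] [Fintype Q] (ζ : Q) (ω : ℂ) (g : Q) :
    auxW Q ζ ω →ₗ[ℂ] auxW Q ζ ω where
  toFun f := ⟨WithLp.toLp 2 fun q => f.1 (q * g), fun q => by
    simpa [mul_assoc] using f.2 (q * g)⟩
  map_add' a b := by ext q; simp
  map_smul' c a := by ext q; simp

lemma auxT_norm (Q : Type*) [Group Q] [Fintype Q] (ζ : Q) (ω : ℂ) (g : Q) (f : auxW Q ζ ω) :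
    ‖auxT Q ζ ω g f‖ = ‖f‖ := by
  rw [Submodule.coe_norm, Submodule.coe_norm, EuclideanSpace.norm_eq, EuclideanSpace.norm_eq]
  congr 1
  exact Equiv.sum_comp (Equiv.mulRight g) (fun q => ‖f.1 q‖ ^ 2)

lemma auxW_nontrivial (Q : Type*) [Group Q] [Fintype Q] (ζ : Q) (ω : ℂ) (hω : ω ^ orderOf ζ = 1) :
    Nontrivial (auxW Q ζ ω) := by
  have hω0 : ω ≠ 0 := by
    rintro rfl
    rw [zero_pow (orderOf_pos ζ).ne'] at hω
    exact zero_ne_one hω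
  have key : ∀ a b : ℤ, ζ ^ a = ζ ^ b → ω ^ a = ω ^ b := by
    intro a b hab
    rw [zpow_eq_zpow_iff_modEq] at hab
    obtain ⟨k, hk⟩ := hab.dvd
    have : b = a + orderOf ζ * k := by linarith
    rw [this, zpow_add₀ hω0, zpow_mul, zpow_natCast, hω]
    simp
  let f : Q → ℂ := fun q => if h : ∃ n : ℤ, ζ ^ n = q then ω ^ h.choose else 0
  have hf : ∀ n : ℤ, f (ζ ^ n) = ω ^ n := by
    intro n
    have h : ∃ m : ℤ, ζ ^ m = ζ ^ n := ⟨n, rfl⟩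
    simp only [f]
    rw [dif_pos h]
    exact key _ _ h.choose_spec
  have hfW : (WithLp.toLp 2 f : EuclideanSpace ℂ Q) ∈ auxW Q ζ ω := by
    intro q
    change f (ζ * q) = ω * f q
    by_cases h : ∃ n : ℤ, ζ ^ n = q
    · obtain ⟨n, rfl⟩ := h
      rw [← zpow_one_add, hf, hf, zpow_add₀ hω0, zpow_one]
    · have h' : ¬ ∃ n : ℤ, ζ ^ n = ζ * q := by
        rintro ⟨n, hn⟩
        exact h ⟨-1 + n, by rw [zpow_add, hn]; simp⟩
      simp only [f]
      rw [dif_neg h, dif_neg h', mul_zero]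
  refine ⟨⟨⟨_, hfW⟩, 0, fun h => ?_⟩⟩
  have h1 : f 1 = 0 := by
    have := congrArg (fun w : auxW Q ζ ω => w.1 1) h
    simpa using this
  have := hf 0
  simp [h1] at this

lemma aux_unitary {n : ℕ} (A B : Mat n) (hAB : A * B = 1) (hA : ∀ x, ‖A x‖ = ‖x‖) :
    A ∈ unitary (Mat n) := by
  have h1 : star A * A = 1 := (ContinuousLinearMap.norm_map_iff_adjoint_comp_self A).mp hA
  have h2 : star A = B := by
    calc star A = star A * (A * B) := by rw [hAB, mul_one]
      _ = B := by rw [← mul_assoc, h1, one_mul]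
  exact Unitary.mem_iff.mpr ⟨h1, by rw [h2, hAB]⟩

lemma aux_rep_fin (Q : Type*) [Group Q] [Fintype Q] (ζ : Q) (hζ : ζ ∈ Subgroup.center Q) (ω : ℂ)
    (hω : ω ^ orderOf ζ = 1) :
    ∃ N : ℕ, 0 < N ∧ ∃ π : Q →* unitary (Mat N), (π ζ : Mat N) = ω • 1 := by
  have := auxW_nontrivial Q ζ ω hω
  let N := Module.finrank ℂ (auxW Q ζ ω)
  let b : auxW Q ζ ω ≃ₗᵢ[ℂ] EuclideanSpace ℂ (Fin N) := (stdOrthonormalBasis ℂ (auxW Q ζ ω)).repr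
  let P : Q → Mat N := fun g => LinearMap.toContinuousLinearMap
    (b.toLinearEquiv.toLinearMap ∘ₗ auxT Q ζ ω g ∘ₗ b.symm.toLinearEquiv.toLinearMap)
  have hP : ∀ g x, P g x = b (auxT Q ζ ω g (b.symm x)) := fun g x => rfl
  have hP1 : P 1 = 1 := by
    ext1 x
    rw [hP]
    have : auxT Q ζ ω 1 (b.symm x) = b.symm x := by
      ext q; simp [auxT]
    rw [this]; simp
  have hPm : ∀ g h, P (g * h) = P g * P h := by
    intro g h
    ext1 x
    rw [mul_apply_eq_comp, hP, hP, hP, b.symm_apply_apply]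
    congr 1
    ext q
    simp [auxT, mul_assoc]
  have hPu : ∀ g, P g ∈ unitary (Mat N) := fun g =>
    aux_unitary (P g) (P g⁻¹) (by rw [← hPm, mul_inv_cancel, hP1]) fun x => by
      rw [hP, b.norm_map, auxT_norm, b.symm.norm_map]
  refine ⟨N, Module.finrank_pos, ⟨⟨fun g => ⟨P g, hPu g⟩, Subtype.ext hP1⟩,
    fun g h => Subtype.ext (hPm g h)⟩, ?_⟩
  change P ζ = _
  ext1 x
  rw [hP]
  have : auxT Q ζ ω ζ (b.symm x) = ω • b.symm x := by
    ext q
    have := (b.symm x).2 q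
    rw [← Subgroup.mem_center_iff.mp hζ q] at this
    simpa [auxT] using this
  rw [this]; simp

lemma aux_rep {G : Type*} [Group G] (z : G) (hz : z ∈ Subgroup.center G) (hzord : ¬ IsOfFinOrder z)
    (hrf : ∀ g : G, g ≠ 1 → ∃ H : Subgroup G, H.FiniteIndex ∧ g ∉ H) (k : ℕ) :
    ∃ N : ℕ, 0 < N ∧ ∃ (π : G →* unitary (Mat N)) (t : ℝ), 0 < t ∧ t ≤ 2 * Real.pi / (k + 1) ∧
      (π z : Mat N) = Complex.exp (Complex.I * t) • 1 := by
  obtain ⟨H, hn, hfi, hH⟩ := aux_quot z hzord hrf k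
  have : Fintype (G ⧸ H) := Fintype.ofFinite _
  let ζ : G ⧸ H := QuotientGroup.mk z
  have hm : 0 < orderOf ζ := orderOf_pos ζ
  have hk : k + 1 ≤ orderOf ζ := by
    by_contra hlt
    refine hH (orderOf ζ) hm (by omega) ?_
    rw [← QuotientGroup.eq_one_iff]
    exact pow_orderOf_eq_one ζ
  have hζ : ζ ∈ Subgroup.center (G ⧸ H) := by
    rw [Subgroup.mem_center_iff]
    intro q
    obtain ⟨g, rfl⟩ := QuotientGroup.mk_surjective q
    exact congrArg (QuotientGroup.mk (s := H)) (Subgroup.mem_center_iff.mp hz g)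
  have hm' : (0 : ℝ) < orderOf ζ := by exact_mod_cast hm
  obtain ⟨N, hN, π, hπ⟩ := aux_rep_fin (G ⧸ H) ζ hζ
    (Complex.exp (Complex.I * (2 * Real.pi / orderOf ζ : ℝ))) (by
      rw [← Complex.exp_nat_mul, Complex.exp_eq_one_iff]
      refine ⟨1, ?_⟩
      have : (orderOf ζ : ℂ) ≠ 0 := by exact_mod_cast hm.ne'
      push_cast
      field_simp)
  refine ⟨N, hN, π.comp (QuotientGroup.mk' H), 2 * Real.pi / orderOf ζ, by positivity, ?_, hπ⟩
  gcongr
  exact_mod_cast hk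

lemma aux_zpow {N : ℕ} (u : unitary (Mat N)) (t : ℝ)
    (hu : (u : Mat N) = Complex.exp (Complex.I * t) • 1) (n : ℤ) :
    ((u ^ n : unitary (Mat N)) : Mat N) = Complex.exp (Complex.I * ((t * n : ℝ) : ℂ)) • 1 := by
  have hnat : ∀ n : ℕ, ((u ^ n : unitary (Mat N)) : Mat N)
      = Complex.exp (Complex.I * ((t * n : ℝ) : ℂ)) • 1 := by
    intro n
    rw [SubmonoidClass.coe_pow, hu, smul_pow, one_pow, ← Complex.exp_nat_mul]
    congr 2
    push_cast; ring
  obtain ⟨m, rfl | rfl⟩ := n.eq_nat_or_neg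
  · rw [zpow_natCast, hnat]; simp
  · rw [zpow_neg, zpow_natCast, ← Unitary.star_eq_inv, Unitary.coe_star, hnat, star_smul, star_one]
    congr 1
    rw [Complex.star_def, ← Complex.exp_conj]
    congr 1
    simp

lemma aux_cycle {Γ : Type*} [Group Γ] (c : (Γ × Γ) →₀ ℤ) (hc : IsTwoCycle c) (l : Γ → ℂ) :
    ∑ p ∈ c.support, (c p : ℂ) * (l p.2 - l (p.1 * p.2) + l p.1) = 0 := by
  let F : Finset Γ := c.support.image (fun p => p.1) ∪ c.support.image (fun p => p.2) ∪
    c.support.image (fun p => p.1 * p.2)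
  have h0 : ∑ g ∈ F, ((chainBoundary c g : ℤ) : ℂ) * l g = 0 := by
    have : chainBoundary c = 0 := hc
    simp [this]
  rw [← h0]
  simp only [chainBoundary, Finsupp.sum, Int.cast_sum, Finset.sum_mul]
  rw [Finset.sum_comm]
  refine Finset.sum_congr rfl fun p hp => ?_
  have m1 : p.1 ∈ F := by
    simp only [F, Finset.mem_union, Finset.mem_image]; exact Or.inl (Or.inl ⟨p, hp, rfl⟩)
  have m2 : p.2 ∈ F := by
    simp only [F, Finset.mem_union, Finset.mem_image]; exact Or.inl (Or.inr ⟨p, hp, rfl⟩)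
  have m3 : p.1 * p.2 ∈ F := by
    simp only [F, Finset.mem_union, Finset.mem_image]; exact Or.inr ⟨p, hp, rfl⟩
  have key : ∀ a ∈ F, ∑ g ∈ F, (if a = g then (1 : ℂ) else 0) * l g = l a := by
    intro a ha
    simp [ite_mul, ha]
  rw [← key _ m1, ← key _ m2, ← key _ m3, ← Finset.sum_sub_distrib, ← Finset.sum_add_distrib,
    Finset.mul_sum]
  refine Finset.sum_congr rfl fun g _ => ?_
  push_cast
  ring

theorem stmt1 {G : Type*} {Γ : Type*} [Group G] [Group Γ]
    (φ : G →* Γ) (hφ : Function.Surjective φ)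
    (z : G) (hz : z ∈ Subgroup.center G) (hzord : ¬ IsOfFinOrder z)
    (hker : φ.ker = Subgroup.zpowers z)
    (hrf : ∀ g : G, g ≠ 1 → ∃ H : Subgroup G, H.FiniteIndex ∧ g ∉ H)
    (θ : Γ → G) (hθ : ∀ g : Γ, φ (θ g) = g)
    (σ : Γ → Γ → ℤ) (hσ : ∀ g h : Γ, θ g * θ h = z ^ (σ g h) * θ (g * h))
    (c : (Γ × Γ) →₀ ℤ) (hc : IsTwoCycle c) (hpair : pairInt σ c ≠ 0) :
    ¬ MatriciallyStable Γ := by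
  intro hst
  choose N hN π t ht htk hπz using fun k => aux_rep z hz hzord hrf k
  have htlim : Filter.Tendsto t Filter.atTop (nhds 0) := by
    refine squeeze_zero (fun k => (ht k).le) htk ?_
    have := (tendsto_one_div_add_atTop_nhds_zero_nat (𝕜 := ℝ)).const_mul (2 * Real.pi)
    simpa [div_eq_mul_inv] using this
  let ρ : ∀ k, Γ → Mat (N k) := fun k g => (π k (θ g) : Mat (N k))
  have hmul : ∀ k g h, ρ k g * ρ k h =
      Complex.exp (Complex.I * ((t k * σ g h : ℝ) : ℂ)) • ρ k (g * h) := by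
    intro k g h
    have : ρ k g * ρ k h = ((π k z ^ (σ g h) : unitary (Mat (N k))) : Mat (N k)) * ρ k (g * h) := by
      simp only [ρ]
      rw [← Submonoid.coe_mul, ← MonoidHom.map_mul, hσ, MonoidHom.map_mul, MonoidHom.map_zpow, Submonoid.coe_mul]
    rw [this, aux_zpow _ _ (hπz k), smul_mul_assoc, one_mul]
  have hnorm : ∀ k g, ‖ρ k g‖ ≤ 1 := by
    intro k g
    have := CStarRing.norm_mem_unitary_mul (1 : Mat (N k)) (π k (θ g)).2
    rw [mul_one] at this
    exact this.le.trans ContinuousLinearMap.norm_id_le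
  have hlimσ : ∀ n : ℤ, Filter.Tendsto (fun k => |t k * n|) Filter.atTop (nhds 0) := by
    intro n
    simpa using (htlim.mul_const (n : ℝ)).abs
  have hasym : IsAsymptoticRep N ρ := by
    refine ⟨fun k g => (π k (θ g)).2, fun g h => ?_⟩
    refine squeeze_zero (fun k => norm_nonneg _) (fun k => ?_) (hlimσ (σ g h))
    rw [hmul, norm_sub_rev]
    have : Complex.exp (Complex.I * ((t k * σ g h : ℝ) : ℂ)) • ρ k (g * h) - ρ k (g * h)
      = (Complex.exp (Complex.I * ((t k * σ g h : ℝ) : ℂ)) - 1) • ρ k (g * h) := by module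
    rw [this, norm_smul]
    calc _ ≤ ‖t k * σ g h‖ * 1 := by
          gcongr
          · exact Real.norm_exp_I_mul_ofReal_sub_one_le
          · exact hnorm _ _
      _ = _ := by rw [mul_one, Real.norm_eq_abs]
  obtain ⟨ρ', hρ'⟩ := hst N ρ hasym
  have hev : ∀ᶠ k in Filter.atTop, ∀ p ∈ c.support, |t k * σ p.1 p.2| < 1/3 ∧
      ‖ρ k p.1 - (ρ' k p.1 : Mat (N k))‖ < 1/3 ∧ ‖ρ k p.2 - (ρ' k p.2 : Mat (N k))‖ < 1/3 ∧
      ‖ρ k (p.1 * p.2) - (ρ' k (p.1 * p.2) : Mat (N k))‖ < 1/3 := by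
    rw [Filter.eventually_all_finset]
    intro p _
    have h3 : (0 : ℝ) < 1/3 := by norm_num
    exact ((hlimσ _).eventually_lt_const h3).and (((hρ' _).eventually_lt_const h3).and
      (((hρ' _).eventually_lt_const h3).and ((hρ' _).eventually_lt_const h3)))
  obtain ⟨k, hk⟩ := hev.exists
  obtain ⟨L, hL, h1, hexp⟩ := aux_log (N k)
  let u : Γ → Mat (N k) := fun g => ρ k g * star (ρ' k g : Mat (N k))
  have hr1 : ∀ g, (ρ' k g : Mat (N k)) * star (ρ' k g : Mat (N k)) = 1 := fun g =>
    (Unitary.mem_iff.mp (ρ' k g).2).2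
  have hr2 : ∀ g, star (ρ' k g : Mat (N k)) * (ρ' k g : Mat (N k)) = 1 := fun g =>
    (Unitary.mem_iff.mp (ρ' k g).2).1
  have hu : ∀ g, ‖ρ k g - (ρ' k g : Mat (N k))‖ < 1/3 → ‖u g - 1‖ < 1/3 := by
    intro g hg
    have : u g - 1 = (ρ k g - (ρ' k g : Mat (N k))) * star (ρ' k g : Mat (N k)) := by
      rw [sub_mul, hr1]
    rwa [this, CStarRing.norm_mul_mem_unitary _ (Unitary.star_mem (ρ' k g).2)]
  have hrel : ∀ p ∈ c.support, L (u p.2) - L (u (p.1 * p.2)) + L (u p.1)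
      = N k * (Complex.I * ((t k * σ p.1 p.2 : ℝ) : ℂ)) := by
    intro p hp
    obtain ⟨k1, k2, k3, k4⟩ := hk p hp
    have e1 := aux_L_mul L hL h1 hexp _ (ρ' k p.1).2 (u p.1) (u p.2) (hu _ k2) (hu _ k3)
    have e2 := aux_L_smul L hL h1 hexp (t k * σ p.1 p.2) (u (p.1 * p.2)) k1 (hu _ k4)
    have e3 : u p.1 * ((ρ' k p.1 : Mat (N k)) * u p.2 * star (ρ' k p.1 : Mat (N k)))
        = Complex.exp (Complex.I * ((t k * σ p.1 p.2 : ℝ) : ℂ)) • u (p.1 * p.2) := by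
      simp only [u]
      rw [← smul_mul_assoc, ← hmul, map_mul, Submonoid.coe_mul, star_mul]
      calc _ = ρ k p.1 * (star (ρ' k p.1 : Mat (N k)) * (ρ' k p.1 : Mat (N k))) * ρ k p.2 *
            star (ρ' k p.2 : Mat (N k)) * star (ρ' k p.1 : Mat (N k)) := by
              simp only [mul_assoc]
        _ = _ := by rw [hr2]; simp only [mul_assoc, one_mul]
    rw [e3, e2] at e1
    linear_combination -e1
  have hcyc := aux_cycle c hc (fun g => L (u g))
  rw [Finset.sum_congr rfl fun p hp => by rw [hrel p hp]] at hcyc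
  have : (N k : ℂ) * Complex.I * (t k : ℂ) * ((pairInt σ c : ℤ) : ℂ) = 0 := by
    rw [← hcyc, pairInt, Finsupp.sum, Int.cast_sum, Finset.mul_sum]
    refine Finset.sum_congr rfl fun p _ => ?_
    push_cast
    ring
  have hNk : (N k : ℂ) ≠ 0 := by exact_mod_cast (hN k).ne'
  have htk' : (t k : ℂ) ≠ 0 := by exact_mod_cast (ht k).ne'
  have hp' : ((pairInt σ c : ℤ) : ℂ) ≠ 0 := by exact_mod_cast hpair
  exact mul_ne_zero (mul_ne_zero (mul_ne_zero hNk Complex.I_ne_zero) htk') hp' this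
end
end

section
/- Let Γ be a finitely generated torsion-free nilpotent group that is neither trivial nor infinite cyclic. Then H²(Γ;ℚ) ≠ 0, i.e., the second group cohomology of Γ with trivial coefficients in ℚ is a nontrivial ℚ-vector space. -/
open scoped commutatorElement

open PowerSeries in
/-- Splitting of trivial cocycles. -/
theorem aux_split {Γ : Type} [Group Γ] (hs : Subsingleton (groupCohomology (Rep.trivial ℚ Γ ℚ) 2))
    (f : Γ → Γ → ℚ) (hf : ∀ g h j, f (g * h) j + f g h = f h j + f g (h * j)) :
    ∃ s : Γ → ℚ, ∀ g h, f g h = s h - s (g * h) + s g := by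
  have hm : (fun p : Γ × Γ => f p.1 p.2) ∈ groupCohomology.cocycles₂ (Rep.trivial ℚ Γ ℚ) := by
    rw [groupCohomology.mem_cocycles₂_iff]
    intro g h j
    exact hf g h j
  have h0 := (groupCohomology.H2π_eq_zero_iff (A := Rep.trivial ℚ Γ ℚ) ⟨_, hm⟩).1
    (Subsingleton.elim _ _)
  obtain ⟨s, hs'⟩ := h0
  refine ⟨s, fun g h => ?_⟩
  exact (congrFun hs' (g, h)).symm

open PowerSeries in
theorem aux_lift {Γ : Type} [Group Γ] (hs : Subsingleton (groupCohomology (Rep.trivial ℚ Γ ℚ) 2))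
    (φ : Γ → PowerSeries ℚ) (hφ : ∀ g h, φ (g * h) = φ g * φ h)
    (hφ0 : ∀ g, constantCoeff (φ g) = 1) (a : Γ → ℚ) (ha : ∀ g h, a (g * h) = a g + a h) (n : ℕ) :
    ∃ c : Γ → PowerSeries ℚ, (∀ g, constantCoeff (c g) = a g) ∧
      ∀ g h, (X : PowerSeries ℚ) ^ (n + 1) ∣ φ g * c h - c (g * h) + c g := by
  induction n with
  | zero =>
    refine ⟨fun g => C (a g), by simp, fun g h => ?_⟩
    rw [zero_add, pow_one, X_dvd_iff]
    simp [hφ0, ha]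
  | succ n ih =>
    obtain ⟨c, hc0, hc⟩ := ih
    choose d hd using hc
    obtain ⟨s, hs⟩ := aux_split hs (fun g h => constantCoeff (d g h)) (by
      intro g h j
      have key : φ g * d h j - d (g * h) j + d g (h * j) - d g h = 0 := by
        have hX : (X : PowerSeries ℚ) ^ (n + 1) ≠ 0 := pow_ne_zero _ X_ne_zero
        apply mul_left_cancel₀ hX
        have h1 := hd h j
        have h2 := hd (g * h) j
        have h3 := hd g (h * j)
        have h4 := hd g h
        rw [hφ] at h2
        rw [← mul_assoc] at h3
        linear_combination (-φ g) * h1 + h2 - h3 + h4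
      have := congrArg constantCoeff key
      simp [hφ0] at this
      linarith)
    refine ⟨fun g => c g - C (s g) * X ^ (n + 1), by simp [hc0], fun g h => ?_⟩
    have e : φ g * (c h - C (s h) * X ^ (n + 1)) - (c (g * h) - C (s (g * h)) * X ^ (n + 1)) +
        (c g - C (s g) * X ^ (n + 1)) =
        X ^ (n + 1) * (d g h - φ g * C (s h) + C (s (g * h)) - C (s g)) := by
      linear_combination hd g h
    rw [e, pow_succ _ (n + 1)]
    apply mul_dvd_mul_left
    rw [X_dvd_iff]
    simp only [map_sub, map_add, map_mul, hφ0, hs, constantCoeff_C]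
    ring

open PowerSeries in
theorem aux_main {Γ : Type} [Group Γ] [Group.IsNilpotent Γ]
    (hs : Subsingleton (groupCohomology (Rep.trivial ℚ Γ ℚ) 2))
    (a b : Γ →* Multiplicative ℤ) (x y : Γ) (hbx : b x = 1) (hby : b y ≠ 1) : a x = 1 := by
  by_contra hax
  let φ : Γ → PowerSeries ℚ := fun g => rescale ((Multiplicative.toAdd (b g) : ℤ) : ℚ) (exp ℚ)
  have hφ : ∀ g h, φ (g * h) = φ g * φ h := by
    intro g h
    simp only [φ, exp_mul_exp_eq_exp_add, map_mul, toAdd_mul, Int.cast_add]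
  have hφ0 : ∀ g, constantCoeff (φ g) = 1 := by
    intro g
    simp [φ, ← coeff_zero_eq_constantCoeff_apply]
  have hφ1 : ∀ g, b g = 1 → φ g = 1 := by
    intro g hg
    simp [φ, hg, rescale_zero]
  let a' : Γ → ℚ := fun g => ((Multiplicative.toAdd (a g) : ℤ) : ℚ)
  have ha' : ∀ g h, a' (g * h) = a' g + a' h := by
    intro g h; simp [a']
  have hax' : a' x ≠ 0 := by
    simpa [a'] using hax
  set n := Group.nilpotencyClass Γ with hn
  obtain ⟨c, hc0, hc⟩ := aux_lift hs φ hφ hφ0 a' ha' n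
  have hz : ∀ m : ℕ, ∃ z ∈ (⊤ : Subgroup Γ).lowerCentralSeries m, b z = 1 ∧
      (X : PowerSeries ℚ) ^ (n + 1) ∣ c z - (1 - φ y) ^ m * c x := by
    intro m
    induction m with
    | zero => exact ⟨x, by simp, hbx, by simp⟩
    | succ m ih =>
      obtain ⟨z, hz, hbz, hcz⟩ := ih
      have hbw : b ⁅z, y⁆ = 1 := by simp [commutatorElement_def, hbz]
      refine ⟨⁅z, y⁆, ?_, hbw, ?_⟩
      · rw [Subgroup.lowerCentralSeries_succ]
        exact Subgroup.commutator_mem_commutator hz (Subgroup.mem_top y)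
      · have e : ⁅z, y⁆ * (y * z) = z * y := by
          simp [commutatorElement_def, mul_assoc]
        have h1 := hc ⁅z, y⁆ (y * z)
        have h2 := hc y z
        have h3 := hc z y
        rw [e, hφ1 _ hbw] at h1
        rw [hφ1 _ hbz] at h3
        have := ((h1.add h2).sub h3).add (hcz.mul_left (1 - φ y))
        convert this using 1
        ring
  obtain ⟨z, hz, -, hcz⟩ := hz n
  have hz1 : z = 1 := by
    rw [hn, Subgroup.lowerCentralSeries_nilpotencyClass] at hz
    simpa using hz
  have hc1 : (X : PowerSeries ℚ) ^ (n + 1) ∣ c z := by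
    have := hc 1 1
    rw [hφ1 1 (map_one b)] at this
    simpa [hz1] using this
  have h5 : (X : PowerSeries ℚ) ^ (n + 1) ∣ (1 - φ y) ^ n * c x := by
    have := hc1.sub hcz
    simpa using this
  have hX : (X : PowerSeries ℚ) ∣ 1 - φ y := by
    rw [X_dvd_iff]; simp [hφ0]
  obtain ⟨w, hw⟩ := hX
  have hw0 : constantCoeff w ≠ 0 := by
    have := congrArg (coeff 1) hw
    rw [show (1 : ℕ) = 0 + 1 from rfl, coeff_succ_X_mul] at this
    rw [coeff_zero_eq_constantCoeff_apply] at this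
    rw [← this]
    simpa [φ, coeff_one, coeff_exp] using hby
  rw [hw, mul_pow, mul_assoc, pow_succ] at h5
  have h6 := (mul_dvd_mul_iff_left (pow_ne_zero n (X_ne_zero (R := ℚ)))).1 h5
  rw [X_dvd_iff] at h6
  simp [hc0, hw0, hax'] at h6

theorem aux_comm (G : Type) [CommGroup G] [Group.FG G]
    (htf : ∀ z : G, ∀ n : ℕ, 0 < n → z ^ n = 1 → z = 1)
    (hr : ∀ (a b : G →* Multiplicative ℤ) (x y : G), b x = 1 → b y ≠ 1 → a x = 1) :
    IsCyclic G := by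
  haveI : Module.Finite ℤ (Additive G) := Module.Finite.iff_addGroup_fg.2 inferInstance
  haveI : IsAddTorsionFree (Additive G) := by
    rw [isAddTorsionFree_iff_not_isOfFinAddOrder]
    intro x hx h
    rw [isOfFinAddOrder_iff_nsmul_eq_zero] at h
    obtain ⟨n, hn, h⟩ := h
    exact hx (htf x.toMul n hn h)
  haveI : Module.Free ℤ (Additive G) := inferInstance
  let B := Module.Free.chooseBasis ℤ (Additive G)
  have hsub : Subsingleton (Module.Free.ChooseBasisIndex ℤ (Additive G)) := by
    constructor
    intro i j
    by_contra hij
    have := hr (AddMonoidHom.toMultiplicativeRight (B.coord i).toAddMonoidHom)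
      (AddMonoidHom.toMultiplicativeRight (B.coord j).toAddMonoidHom)
      (B i).toMul (B j).toMul (by simp [hij]) (by simp)
    simp at this
  rcases isEmpty_or_nonempty (Module.Free.ChooseBasisIndex ℤ (Additive G)) with he | ⟨⟨i⟩⟩
  · have : Subsingleton (Additive G) := B.repr.toEquiv.subsingleton
    exact ⟨1, fun g => ⟨0, this.elim _ _⟩⟩
  · refine ⟨(B i).toMul, fun g => ⟨B.repr (Additive.ofMul g) i, ?_⟩⟩
    haveI : Unique (Module.Free.ChooseBasisIndex ℤ (Additive G)) := ⟨⟨i⟩, fun _ => Subsingleton.elim _ _⟩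
    have := B.sum_repr (Additive.ofMul g)
    rw [Fintype.sum_subsingleton _ i] at this
    exact this

theorem aux_cyclic (G : Type) [Group G] [Group.IsNilpotent G] : Group.FG G →
    (∀ z ∈ Subgroup.center G, ∀ n : ℕ, 0 < n → z ^ n = 1 → z = 1) →
    (∀ (a b : G →* Multiplicative ℤ) (x y : G), b x = 1 → b y ≠ 1 → a x = 1) →
    IsCyclic G := by
  refine Group.nilpotent_center_quotient_ind
    (P := fun G _ _ => Group.FG G →
    (∀ z ∈ Subgroup.center G, ∀ n : ℕ, 0 < n → z ^ n = 1 → z = 1) →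
    (∀ (a b : G →* Multiplicative ℤ) (x y : G), b x = 1 → b y ≠ 1 → a x = 1) →
    IsCyclic G) G ?_ ?_
  · intro G _ _ _ _ _
    infer_instance
  · intro G _ _ ih hfg htf hr
    have hcyc : IsCyclic (G ⧸ Subgroup.center G) := by
      refine ih inferInstance ?_ ?_
      · intro z hz n hn h
        induction z using QuotientGroup.induction_on with | H z =>
        have hcomm : ∀ g : G, ⁅z, g⁆ ∈ Subgroup.center G := by
          intro g
          rw [← QuotientGroup.eq_one_iff]
          have h1 := Subgroup.mem_center_iff.1 hz (g : G ⧸ Subgroup.center G)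
          have : ((⁅z, g⁆ : G) : G ⧸ Subgroup.center G) = ⁅(z : G ⧸ Subgroup.center G), (g : G ⧸ Subgroup.center G)⁆ := rfl
          rw [this, commutatorElement_eq_one_iff_mul_comm]
          exact h1.symm
        rw [QuotientGroup.eq_one_iff, Subgroup.mem_center_iff]
        intro g
        have hzn : z ^ n ∈ Subgroup.center G := by
          rw [← QuotientGroup.eq_one_iff]; exact h
        have hp : ∀ k : ℕ, z ^ k * g = ⁅z, g⁆ ^ k * (g * z ^ k) := by
          intro k
          induction k with
          | zero => simp
          | succ k ihk =>
            have hc := Subgroup.mem_center_iff.1 (hcomm g)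
            have e : z * g = ⁅z, g⁆ * (g * z) := by simp [commutatorElement_def, mul_assoc]
            calc z ^ (k+1) * g = z ^ k * (z * g) := by rw [pow_succ, mul_assoc]
              _ = z ^ k * (⁅z, g⁆ * (g * z)) := by rw [← e]
              _ = ⁅z, g⁆ * (z ^ k * g) * z := by
                rw [← mul_assoc, hc]; simp only [mul_assoc]
              _ = _ := by
                rw [ihk, pow_succ' ⁅z, g⁆, pow_succ z]; simp only [mul_assoc]
        have h1 := hp n
        rw [Subgroup.mem_center_iff.1 hzn g] at h1
        have h2 := htf _ (hcomm g) n hn (by simpa using h1.symm)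
        rw [commutatorElement_eq_one_iff_mul_comm] at h2
        exact h2.symm
      · intro a b x y hx hy
        induction x using QuotientGroup.induction_on with | H x =>
        induction y using QuotientGroup.induction_on with | H y =>
        exact hr (a.comp (QuotientGroup.mk' _)) (b.comp (QuotientGroup.mk' _)) x y hx hy
    letI : CommGroup G := commGroupOfCyclicCenterQuotient (QuotientGroup.mk' (Subgroup.center G))
      (QuotientGroup.ker_mk' _).le
    refine aux_comm G (fun z n hn h => htf z ?_ n hn h) hr
    rw [Subgroup.mem_center_iff]
    intro g
    exact mul_comm g z

/-- A finitely generated torsion-free nilpotent group which is neither trivial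
nor infinite cyclic has nonvanishing second rational cohomology (trivial coefficients). -/
theorem stmt4 {Γ : Type} [Group Γ] [Group.FG Γ] [Group.IsNilpotent Γ]
    (htf : ∀ g : Γ, g ≠ 1 → ¬ IsOfFinOrder g)
    (hnontriv : Nontrivial Γ) (hnotZ : IsEmpty (Γ ≃* Multiplicative ℤ)) :
    Nontrivial (groupCohomology (Rep.trivial ℚ Γ ℚ) 2) := by
  by_contra hcon
  have hs := not_nontrivial_iff_subsingleton.1 hcon
  have hcyc : IsCyclic Γ := aux_cyclic Γ inferInstance
    (fun z _ n hn h => by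
      by_contra hz
      exact htf z hz (isOfFinOrder_iff_pow_eq_one.2 ⟨n, hn, h⟩))
    (fun a b x y hx hy => aux_main hs a b x y hx hy)
  have hinf : Infinite Γ := by
    by_contra hfin
    rw [not_infinite_iff_finite] at hfin
    obtain ⟨g, hg⟩ := exists_ne (1 : Γ)
    exact htf g hg (isOfFinOrder_of_finite g)
  exact hnotZ.elim (intCyclicMulEquiv (G := Γ)).symm
end

section
/- Let G̃ be a group and z ∈ G̃ a central element of infinite order. The following are equivalent: (1) there exists a sequence (Γₖ)_{k∈ℕ} of finite-index subgroups of G̃ such that the intersection of the cyclic subgroup ⟨z⟩ with ⋂ₖ Γₖ is trivial; (2) the set of natural numbers n for which there exists a finite-index normal subgroup K of G̃ such that the image of z in the finite quotient G̃/K has order exactly n, is infinite. -/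
/-- For a central element `z` of infinite order in `G`, the existence of a
sequence of finite-index subgroups whose intersection meets `⟨z⟩` trivially is equivalent to
`z` having order exactly `n` in some finite quotient of `G` for infinitely many `n`. -/
theorem stmt7 {G : Type*} [Group G] (z : G) (hz : z ∈ Subgroup.center G)
    (hzord : ¬ IsOfFinOrder z) :
    (∃ Γ : ℕ → Subgroup G, (∀ k, (Γ k).FiniteIndex) ∧
        Subgroup.zpowers z ⊓ (⨅ k, Γ k) = ⊥) ↔
      {n : ℕ | ∃ (K : Subgroup G) (_ : K.Normal), K.FiniteIndex ∧
        orderOf (QuotientGroup.mk z : G ⧸ K) = n}.Infinite := by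
  have key : ∀ (K : Subgroup G) (_ : K.Normal) (m : ℕ),
      z ^ m ∈ K ↔ orderOf (QuotientGroup.mk z : G ⧸ K) ∣ m := by
    intro K _ m
    rw [orderOf_dvd_iff_pow_eq_one, ← QuotientGroup.mk_pow, QuotientGroup.eq_one_iff]
  constructor
  · rintro ⟨Γ, hfin, hΓ⟩ hS
    have hpos : 0 < ∏ n ∈ hS.toFinset, n := by
      refine Finset.prod_pos fun n hn => ?_
      obtain ⟨K, hN, hF, rfl⟩ := hS.mem_toFinset.1 hn
      exact orderOf_pos _
    have hmem : z ^ (∏ n ∈ hS.toFinset, n) ∈ Subgroup.zpowers z ⊓ (⨅ k, Γ k) := by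
      refine ⟨Subgroup.npow_mem_zpowers z _, Subgroup.mem_iInf.2 fun k => ?_⟩
      have := hfin k
      refine (Γ k).normalCore_le ((key (Γ k).normalCore inferInstance _).2 ?_)
      exact Finset.dvd_prod_of_mem (fun n => n)
        (hS.mem_toFinset.2 ⟨(Γ k).normalCore, inferInstance, inferInstance, rfl⟩)
    rw [hΓ, Subgroup.mem_bot] at hmem
    exact hzord (isOfFinOrder_iff_pow_eq_one.2 ⟨_, hpos, hmem⟩)
  · intro hS
    choose K hN hF hord using fun k => (hS.natEmbedding _ k).2
    refine ⟨K, hF, ?_⟩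
    rw [eq_bot_iff]
    rintro g ⟨hg, hgK⟩
    obtain ⟨m, rfl⟩ := Subgroup.mem_zpowers_iff.1 hg
    have hdvd : ∀ k, ((hS.natEmbedding _ k : ℕ)) ∣ m.natAbs := by
      intro k
      rw [← hord k, ← key (K k) (hN k)]
      have h1 : z ^ m ∈ K k := (Subgroup.mem_iInf.1 hgK) k
      rcases Int.natAbs_eq m with h | h
      · rw [h] at h1
        rwa [zpow_natCast] at h1
      · rw [h] at h1
        rwa [zpow_neg, zpow_natCast, inv_mem_iff] at h1
    by_cases hm : m = 0
    · simp [hm]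
    · exfalso
      have hinj : Function.Injective (fun k => (hS.natEmbedding _ k : ℕ)) :=
        Subtype.val_injective.comp (hS.natEmbedding _).injective
      refine Set.infinite_range_of_injective hinj ((Set.finite_Iic m.natAbs).subset ?_)
      rintro _ ⟨k, rfl⟩
      exact Nat.le_of_dvd (Int.natAbs_pos.2 hm) (hdvd k)
end

section
/- Suppose Γ is a torsion-free finitely generated nilpotent group with a Mal'cev basis (a₁,…,aₘ), and 1 → ℤ →(ι) Γ̃ →(φ) Γ → 1 is a central extension (ι injective with central image equal to ker φ, φ surjective). If ã₁,…,ãₘ ∈ Γ̃ satisfy φ(ãᵢ) = aᵢ for each i, and ã_{m+1} = ι(1), then (ã₁,…,ãₘ,ã_{m+1}) is a Mal'cev basis for Γ̃. -/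
/-- The ordered product `a₁^{x₁} ⋯ aₘ^{xₘ}`. -/
def normalForm {Γ : Type*} [Group Γ] {m : ℕ} (a : Fin m → Γ) (x : Fin m → ℤ) : Γ :=
  ((List.finRange m).map fun i => a i ^ x i).prod

/-- The subgroup `⟨aₖ₊₁, …, aₘ⟩` (0-indexed: generated by the `a j` with `k ≤ j`). -/
def malcevSubgroup {Γ : Type*} [Group Γ] {m : ℕ} (a : Fin m → Γ) (k : ℕ) : Subgroup Γ :=
  Subgroup.closure {g | ∃ j : Fin m, k ≤ (j : ℕ) ∧ g = a j}

/-- `(a₁,…,aₘ)` is a Mal'cev basis: every element has a unique normal form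
`a₁^{x₁} ⋯ aₘ^{xₘ}`, and the subgroups `Γᵢ = ⟨aᵢ,…,aₘ⟩` form a central series. -/
def IsMalcevBasis {Γ : Type*} [Group Γ] {m : ℕ} (a : Fin m → Γ) : Prop :=
  (∀ g : Γ, ∃! x : Fin m → ℤ, g = normalForm a x) ∧
  malcevSubgroup a 0 = ⊤ ∧
  ∀ k : ℕ, k < m → ⁅(⊤ : Subgroup Γ), malcevSubgroup a k⁆ ≤ malcevSubgroup a (k + 1)

theorem aux_nf_snoc {G : Type*} [Group G] {m : ℕ} (b : Fin m → G) (z : G) (x : Fin (m + 1) → ℤ) :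
    normalForm (Fin.snoc b z : Fin (m + 1) → G) x
      = normalForm b (fun i => x i.castSucc) * z ^ x (Fin.last m) := by
  unfold normalForm
  rw [List.finRange_succ_last]
  simp [Function.comp_def]

theorem aux_nf_map {G Γ : Type*} [Group G] [Group Γ] (φ : G →* Γ) {m : ℕ} (b : Fin m → G)
    (x : Fin m → ℤ) : φ (normalForm b x) = normalForm (fun i => φ (b i)) x := by
  unfold normalForm
  rw [map_list_prod]
  simp [Function.comp_def]

theorem aux_comap {G Γ : Type*} [Group G] [Group Γ] (φ : G →* Γ) {m : ℕ} (b : Fin m → G)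
    (z : G) (hz : φ.ker = Subgroup.zpowers z) (k : ℕ) (hk : k ≤ m) :
    malcevSubgroup (Fin.snoc b z : Fin (m + 1) → G) k
      = (malcevSubgroup (fun i => φ (b i)) k).comap φ := by
  have hzk : z ∈ φ.ker := by rw [hz]; exact Subgroup.mem_zpowers z
  have hzm : z ∈ malcevSubgroup (Fin.snoc b z : Fin (m + 1) → G) k :=
    Subgroup.subset_closure ⟨Fin.last m, by simpa using hk, by simp⟩
  have hle : φ.ker ≤ malcevSubgroup (Fin.snoc b z : Fin (m + 1) → G) k := by
    rw [hz]; simpa using hzm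
  have hmap : (malcevSubgroup (Fin.snoc b z : Fin (m + 1) → G) k).map φ
      = malcevSubgroup (fun i => φ (b i)) k := by
    apply le_antisymm
    · rw [Subgroup.map_le_iff_le_comap]
      unfold malcevSubgroup
      rw [Subgroup.closure_le]
      rintro g ⟨j, hj, rfl⟩
      induction j using Fin.lastCases with
      | last =>
        simp only [Fin.snoc_last, SetLike.mem_coe, Subgroup.mem_comap]
        rw [MonoidHom.mem_ker.1 hzk]
        exact one_mem _
      | cast j =>
        simp only [Fin.snoc_castSucc, SetLike.mem_coe, Subgroup.mem_comap]
        exact Subgroup.subset_closure ⟨j, by simpa using hj, rfl⟩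
    · conv_lhs => unfold malcevSubgroup
      rw [Subgroup.closure_le]
      rintro g ⟨j, hj, rfl⟩
      exact ⟨b j, Subgroup.subset_closure ⟨j.castSucc, by simpa using hj, by simp⟩, rfl⟩
  rw [← hmap, Subgroup.comap_map_eq_self hle]

/-- If `Γ` is a torsion-free finitely generated nilpotent group with Mal'cev
basis `(a₁,…,aₘ)` and `1 → ℤ → Γ̃ → Γ → 1` is a central extension, then lifts `ãᵢ` of the
`aᵢ` together with `ã_{m+1} = ι(1)` form a Mal'cev basis of `Γ̃`. -/
theorem stmt11 {Γ G : Type*} [Group Γ] [Group G] [Group.FG Γ] [Group.IsNilpotent Γ]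
    (htf : ∀ g : Γ, g ≠ 1 → ¬ IsOfFinOrder g)
    {m : ℕ} (a : Fin m → Γ) (ha : IsMalcevBasis a)
    (ι : Multiplicative ℤ →* G) (φ : G →* Γ)
    (hι : Function.Injective ι) (hcent : ι.range ≤ Subgroup.center G)
    (hker : ι.range = φ.ker) (hφ : Function.Surjective φ)
    (atil : Fin m → G) (hatil : ∀ i, φ (atil i) = a i) :
    IsMalcevBasis (Fin.snoc atil (ι (Multiplicative.ofAdd (1 : ℤ))) : Fin (m + 1) → G) := by
  obtain rfl : (fun i => φ (atil i)) = a := funext hatil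
  obtain ⟨hnf, htop, hser⟩ := ha
  set z := ι (Multiplicative.ofAdd (1 : ℤ)) with hzdef
  have hzpow : ∀ n : ℤ, z ^ n = ι (Multiplicative.ofAdd n) := by
    intro n
    rw [hzdef, ← map_zpow, ← ofAdd_zsmul]
    simp
  have hz : φ.ker = Subgroup.zpowers z := by
    rw [← hker]
    ext g
    rw [Subgroup.mem_zpowers_iff]
    constructor
    · rintro ⟨n, rfl⟩
      exact ⟨n.toAdd, hzpow _⟩
    · rintro ⟨n, rfl⟩
      exact ⟨Multiplicative.ofAdd n, (hzpow n).symm⟩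
  have hφz : ∀ n : ℤ, φ (z ^ n) = 1 := fun n => by
    rw [← MonoidHom.mem_ker, hz]; exact ⟨n, rfl⟩
  refine ⟨fun g => ?_, ?_, fun k hk => ?_⟩
  · obtain ⟨y, hy, hyu⟩ := hnf (φ g)
    have hmem : (normalForm atil y)⁻¹ * g ∈ φ.ker := by
      rw [MonoidHom.mem_ker, map_mul, map_inv, aux_nf_map, ← hy]; simp
    rw [hz] at hmem
    obtain ⟨n, hn⟩ := Subgroup.mem_zpowers_iff.1 hmem
    refine ⟨Fin.snoc y n, ?_, ?_⟩
    · simp only [aux_nf_snoc, Fin.snoc_castSucc, Fin.snoc_last]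
      rw [hn]; simp
    · intro x hx
      simp only [aux_nf_snoc] at hx
      have h1 : (fun i : Fin m => x i.castSucc) = y := by
        apply hyu
        rw [hx, map_mul, aux_nf_map, hφz, mul_one]
      rw [h1] at hx
      have h2 : z ^ n = z ^ x (Fin.last m) := by rw [hn, hx]; simp
      rw [hzpow, hzpow] at h2
      have h3 : n = x (Fin.last m) := Multiplicative.ofAdd.injective (hι h2)
      funext i
      induction i using Fin.lastCases with
      | last => simp [h3]
      | cast j => simp [← h1]
  · rw [aux_comap φ atil z hz 0 (Nat.zero_le _), htop, Subgroup.comap_top]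
  · rcases Nat.lt_succ_iff_lt_or_eq.1 hk with hk | rfl
    · rw [aux_comap φ atil z hz k hk.le, aux_comap φ atil z hz (k + 1) hk,
        Subgroup.commutator_le]
      intro g _ h hh
      rw [Subgroup.mem_comap, map_commutatorElement]
      exact hser k hk (Subgroup.commutator_mem_commutator (Subgroup.mem_top _) hh)
    · rw [aux_comap φ atil z hz k le_rfl]
      have hbot : malcevSubgroup (fun i => φ (atil i)) k = ⊥ := by
        unfold malcevSubgroup
        rw [Subgroup.closure_eq_bot_iff]
        rintro g ⟨j, hj, -⟩
        exact absurd j.2 (by omega)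
      rw [hbot, MonoidHom.comap_bot, ← hker, Subgroup.commutator_le]
      intro g _ h hh
      have hc := Subgroup.mem_center_iff.1 (hcent hh) g
      rw [commutatorElement_eq_one_iff_mul_comm.2 hc]
      exact one_mem _
end

section
/- Let Γ be a group, c a 2-cycle on Γ, 0 < ε < 1, ρ₀ : Γ → U(n) a function into the n×n complex unitary matrices that is ε-almost multiplicative on the support of c, and ρ₁ : Γ → Mₙ(ℂ) a function such that ‖ρ₀(g) − ρ₁(g)‖ < (1−ε)/24 for all g in the boundary support of c. Then ρ₁ is 1-almost multiplicative on the support of c, and ρ₀ and ρ₁ are homotopy equivalent on the boundary support of c. -/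
noncomputable section
open scoped Classical

/-- `ρ₀` and `ρ₁` are homotopy equivalent on the boundary support of `c`: a continuous
family `ρᵗ`, `t ∈ [0,1]`, of maps, each 1-almost multiplicative on the support of `c`,
interpolates between them on the boundary support of `c`. -/
def HomotopyEquivOn {Γ : Type*} [Group Γ] {n : ℕ} (c : (Γ × Γ) →₀ ℤ)
    (ρ₀ ρ₁ : Γ → Mat n) : Prop :=
  ∃ ρ : Set.Icc (0 : ℝ) 1 → Γ → Mat n,
    (∀ g : Γ, Continuous fun t => ρ t g) ∧
    (∀ g ∈ boundarySupport c, ρ ⟨0, by norm_num⟩ g = ρ₀ g) ∧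
    (∀ g ∈ boundarySupport c, ρ ⟨1, by norm_num⟩ g = ρ₁ g) ∧
    ∀ t, AlmostMultOn (ρ t) c 1

theorem aux_unit_le' {A : Type*} [NormedRing A] [StarRing A] [CStarRing A]
    (h2 : ‖(1 : A)‖ ≤ 1) {U : A} (h : U ∈ unitary A) : ‖U‖ ≤ 1 ∧ ‖star U‖ ≤ 1 := by
  have h1 : ‖star U * U‖ = ‖U‖ * ‖U‖ := CStarRing.norm_star_mul_self
  rw [Unitary.star_mul_self_of_mem h] at h1
  rw [norm_star]
  constructor <;> nlinarith [norm_nonneg U]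

theorem aux_unit_le {n : ℕ} {U : Mat n} (h : U ∈ unitary (Mat n)) : ‖U‖ ≤ 1 ∧ ‖star U‖ ≤ 1 :=
  aux_unit_le' (A := Mat n) ContinuousLinearMap.norm_id_le h

theorem aux_tele {A : Type*} [Ring A] (X Y Z U V W : A) :
    X * Y * Z - 1 = (X - U) * Y * Z + U * (Y - V) * Z + U * V * (Z - W)
      + (U * V * W - 1) := by
  noncomm_ring

theorem aux_inv {n : ℕ} {V Y : Mat n} (hV : V ∈ unitary (Mat n)) {d : ℝ} (hd : d ≤ 1 / 24)
    (h : ‖V - Y‖ < d) :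
    IsUnit Y ∧ Ring.inverse V = star V ∧ ‖Ring.inverse Y‖ ≤ 24 / 23 ∧
      ‖Ring.inverse Y - star V‖ ≤ 24 / 23 * d := by
  have hs : ‖star V‖ ≤ 1 := (aux_unit_le hV).2
  have h1 : star V * V = 1 := Unitary.star_mul_self_of_mem hV
  have h2 : V * star V = 1 := Unitary.mul_star_self_of_mem hV
  have hVu : IsUnit V := ⟨⟨V, star V, h2, h1⟩, rfl⟩
  have hn : ‖star V * (V - Y)‖ ≤ ‖V - Y‖ :=
    (norm_mul_le _ _).trans (by nlinarith [norm_nonneg (V - Y)])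
  have hY : Y = V * (1 - star V * (V - Y)) := by
    rw [mul_sub, ← mul_assoc, h2]; simp
  have hYu : IsUnit Y := by
    rw [hY]
    exact hVu.mul (isUnit_one_sub_of_norm_lt_one (by linarith))
  have hinv : Ring.inverse V = star V := by
    have := Ring.inverse_mul_cancel V hVu
    calc Ring.inverse V = Ring.inverse V * (V * star V) := by rw [h2, mul_one]
      _ = star V := by rw [← mul_assoc, this, one_mul]
  have hc := Ring.mul_inverse_cancel Y hYu
  have hdiff : Ring.inverse Y - star V = star V * (V - Y) * Ring.inverse Y := by
    rw [mul_sub, sub_mul, h1, mul_assoc, hc]; simp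
  have hb : ‖Ring.inverse Y - star V‖ ≤ d * ‖Ring.inverse Y‖ := by
    rw [hdiff]
    refine (norm_mul_le _ _).trans ?_
    exact mul_le_mul_of_nonneg_right (by linarith) (norm_nonneg _)
  have ht : ‖Ring.inverse Y‖ ≤ ‖Ring.inverse Y - star V‖ + ‖star V‖ := by
    simpa using norm_add_le (Ring.inverse Y - star V) (star V)
  have hd0 : 0 < d := lt_of_le_of_lt (norm_nonneg _) h
  have hk : ‖Ring.inverse Y‖ ≤ 24 / 23 := by nlinarith [norm_nonneg (Ring.inverse Y)]
  exact ⟨hYu, hinv, hk, by nlinarith⟩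

theorem aux_key {Γ : Type*} [Group Γ] {n : ℕ} (c : (Γ × Γ) →₀ ℤ)
    {ε : ℝ} (hε0 : 0 < ε) (hε1 : ε < 1)
    (ρ₀ : Γ → Mat n) (hu : ∀ g : Γ, ρ₀ g ∈ unitary (Mat n))
    (hρ₀ : AlmostMultOn ρ₀ c ε) (ρ₁ : Γ → Mat n)
    (hclose : ∀ g ∈ boundarySupport c, ‖ρ₀ g - ρ₁ g‖ < (1 - ε) / 24) :
    AlmostMultOn ρ₁ c 1 := by
  intro p hp
  have m (g : Γ) (hg : g ∈ ({p.1, p.2, p.1 * p.2} : Set Γ)) : g ∈ boundarySupport c :=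
    Set.mem_biUnion hp hg
  have ha := hclose p.1 (m _ (by simp))
  have hb := hclose p.2 (m _ (by simp))
  have hab := hclose (p.1 * p.2) (m _ (by simp))
  obtain ⟨-, -, h0⟩ := hρ₀ p hp
  set d := (1 - ε) / 24 with hd
  have hd1 : d ≤ 1 / 24 := by linarith
  have hd0 : 0 < d := by linarith
  obtain ⟨ua, ia, na, da⟩ := aux_inv (hu p.1) hd1 ha
  obtain ⟨ub, ib, nb, db⟩ := aux_inv (hu p.2) hd1 hb
  refine ⟨ua, ub, ?_⟩
  rw [ia, ib] at h0
  have nU := (aux_unit_le (hu (p.1 * p.2))).1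
  have nV : ‖star (ρ₀ p.1)‖ ≤ 1 := (aux_unit_le (hu p.1)).2
  rw [norm_sub_rev] at hab
  generalize ρ₀ (p.1 * p.2) = U at *
  generalize ρ₁ (p.1 * p.2) = X at *
  generalize star (ρ₀ p.1) = V at *
  generalize star (ρ₀ p.2) = W at *
  generalize Ring.inverse (ρ₁ p.1) = Y at *
  generalize Ring.inverse (ρ₁ p.2) = Z at *
  have e : X * Y * Z - 1 = (X - U) * Y * Z + U * (Y - V) * Z + U * V * (Z - W)
      + (U * V * W - 1) := aux_tele X Y Z U V W
  have t1 : ‖(X - U) * Y * Z‖ ≤ d * (24 / 23) * (24 / 23) :=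
    (norm_mul₃_le).trans (by gcongr)
  have t2 : ‖U * (Y - V) * Z‖ ≤ 1 * (24 / 23 * d) * (24 / 23) :=
    (norm_mul₃_le).trans (by gcongr)
  have t3 : ‖U * V * (Z - W)‖ ≤ 1 * 1 * (24 / 23 * d) :=
    (norm_mul₃_le).trans (by gcongr)
  rw [e]
  have := norm_add₄_le (a := (X - U) * Y * Z) (b := U * (Y - V) * Z) (c := U * V * (Z - W))
    (d := U * V * W - 1)
  linarith

/-- If `ρ₀` is unitary-valued and `ε`-almost multiplicative on the support of
a 2-cycle `c` (`0 < ε < 1`) and `ρ₁` is within `(1-ε)/24` of `ρ₀` on the boundary support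
of `c`, then `ρ₁` is 1-almost multiplicative on the support of `c` and `ρ₀`, `ρ₁` are
homotopy equivalent on the boundary support of `c`. -/
theorem stmt13 {Γ : Type*} [Group Γ] {n : ℕ} (c : (Γ × Γ) →₀ ℤ) (hc : IsTwoCycle c)
    {ε : ℝ} (hε0 : 0 < ε) (hε1 : ε < 1)
    (ρ₀ : Γ → Mat n) (hu : ∀ g : Γ, ρ₀ g ∈ unitary (Mat n))
    (hρ₀ : AlmostMultOn ρ₀ c ε) (ρ₁ : Γ → Mat n)
    (hclose : ∀ g ∈ boundarySupport c, ‖ρ₀ g - ρ₁ g‖ < (1 - ε) / 24) :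
    AlmostMultOn ρ₁ c 1 ∧ HomotopyEquivOn c ρ₀ ρ₁ := by
  refine ⟨aux_key c hε0 hε1 ρ₀ hu hρ₀ ρ₁ hclose,
    fun t g => ρ₀ g + ((t : ℝ) : ℂ) • (ρ₁ g - ρ₀ g), ?_, ?_, ?_, ?_⟩
  · intro g
    fun_prop
  · intro g _
    simp only [Complex.ofReal_zero]
    have h : (0 : ℂ) • (ρ₁ g - ρ₀ g) = 0 := zero_smul ℂ (ρ₁ g - ρ₀ g)
    exact (congrArg (fun z => ρ₀ g + z) h).trans (add_zero _)
  · intro g _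
    simp
  · intro t
    refine aux_key c hε0 hε1 ρ₀ hu hρ₀ _ ?_
    intro g hg
    refine lt_of_le_of_lt ?_ (hclose g hg)
    have h0 := t.2.1
    have h1 := t.2.2
    have : ρ₀ g - (ρ₀ g + ((t : ℝ) : ℂ) • (ρ₁ g - ρ₀ g)) = ((t : ℝ) : ℂ) • (ρ₀ g - ρ₁ g) := by
      module
    rw [this, norm_smul, Complex.norm_real, Real.norm_eq_abs, abs_of_nonneg h0]
    exact mul_le_of_le_one_left (norm_nonneg _) h1
end
end
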